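/- arXiv:1312.1939 — 2 statements merged into one kernel-verified Lean document; each statement's English description precedes it below -/
import Mathlib

section
/- Let λ > 0 and q₋ < x₀ < 0 < q₊. As ε → 0⁺, the conditional law Law[τ_ε − (2/λ)·ln(1/ε) | C_ε] converges weakly to the law of (1/λ)·ln(2λ·q₊·|x₀|) + (1/λ)·Z, where Z is a standard Gumbel random variable. -/
open MeasureTheory ProbabilityTheory Filter Topology Set

/-- `B` is a standard Brownian motion (for times `t ≥ 0`) on the probability space `(Ω, P)`:
it is measurable at each time, starts at `0` with a.s. continuous paths on `[0, ∞)`,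
has centered Gaussian increments of variance `t - s`, and independent increments. -/
def IsBrownianMotion {Ω : Type*} [MeasurableSpace Ω] (P : Measure Ω) (B : ℝ → Ω → ℝ) : Prop :=
  (∀ t : ℝ, Measurable (B t)) ∧
  (∀ᵐ ω ∂P, B 0 ω = 0 ∧ ContinuousOn (fun t => B t ω) (Set.Ici (0 : ℝ))) ∧
  (∀ s t : ℝ, 0 ≤ s → s ≤ t →
    Measure.map (fun ω => B t ω - B s ω) P = gaussianReal 0 (Real.toNNReal (t - s))) ∧
  (∀ t : ℕ → ℝ, Monotone t → (∀ i, 0 ≤ t i) →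
    iIndepFun (fun i ω => B (t (i + 1)) ω - B (t i) ω) P)


/-- The upper tail of the standard normal distribution. -/
noncomputable def gaussianTail (z : ℝ) : ℝ := (gaussianReal 0 1).real (Ici z)

lemma gaussianTail_le_one (z : ℝ) : gaussianTail z ≤ 1 := measureReal_le_one

lemma gaussianTail_eq_integral (z : ℝ) :
    gaussianTail z = ∫ x in Ioi z, gaussianPDFReal 0 1 x := by
  rw [gaussianTail, measureReal_def, gaussianReal_apply_eq_integral _ one_ne_zero,
    ENNReal.toReal_ofReal (integral_nonneg fun x => gaussianPDFReal_nonneg _ _ x),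
    integral_Ici_eq_integral_Ioi]

lemma gaussianPDFReal_zero_one (x : ℝ) :
    gaussianPDFReal 0 1 x = (√(2 * Real.pi))⁻¹ * Real.exp (-x ^ 2 / 2) := by
  simp [gaussianPDFReal]

lemma hasDerivAt_neg_gaussianPDFReal_div {x : ℝ} (hx : x ≠ 0) :
    HasDerivAt (fun x => -(gaussianPDFReal 0 1 x / x))
      (gaussianPDFReal 0 1 x * (1 + 1 / x ^ 2)) x := by
  have h1 : HasDerivAt (gaussianPDFReal 0 1)
      ((√(2 * Real.pi))⁻¹ * (Real.exp (-x ^ 2 / 2) * (-x))) x := by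
    have h2 : HasDerivAt (fun x : ℝ => -x ^ 2 / 2) (-x) x := by
      convert! ((hasDerivAt_pow 2 x).neg.div_const 2) using 1
      simp; ring
    exact (h2.exp.const_mul _).congr_of_eventuallyEq
      (Eventually.of_forall gaussianPDFReal_zero_one)
  convert! (h1.div (hasDerivAt_id x) hx).neg using 1
  rw [gaussianPDFReal_zero_one]
  simp only [id]
  field_simp
  ring

lemma tendsto_gaussianPDFReal_div_atTop :
    Tendsto (fun x => -(gaussianPDFReal 0 1 x / x)) atTop (𝓝 0) := by
  suffices h : Tendsto (fun x => gaussianPDFReal 0 1 x / x) atTop (𝓝 0) by simpa using h.neg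
  refine squeeze_zero' (g := fun x => (√(2 * Real.pi))⁻¹ / x) ?_ ?_
    (tendsto_const_nhds.div_atTop tendsto_id)
  · filter_upwards [eventually_gt_atTop 0] with x hx
    exact div_nonneg (gaussianPDFReal_nonneg _ _ _) hx.le
  · filter_upwards [eventually_gt_atTop 0] with x hx
    rw [gaussianPDFReal_zero_one]
    gcongr
    refine mul_le_of_le_one_right (by positivity) (Real.exp_le_one_iff.2 ?_)
    nlinarith [sq_nonneg x]

lemma gaussianTail_mills {z : ℝ} (hz : 0 < z) :
    gaussianTail z ≤ gaussianPDFReal 0 1 z / z ∧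
      gaussianPDFReal 0 1 z / z ≤ (1 + 1 / z ^ 2) * gaussianTail z := by
  have hd : ∀ x ∈ Ici z, HasDerivAt (fun x => -(gaussianPDFReal 0 1 x / x))
      (gaussianPDFReal 0 1 x * (1 + 1 / x ^ 2)) x := fun x hx =>
    hasDerivAt_neg_gaussianPDFReal_div (hz.trans_le hx).ne'
  have hn : ∀ x ∈ Ioi z, 0 ≤ gaussianPDFReal 0 1 x * (1 + 1 / x ^ 2) := fun x _ =>
    mul_nonneg (gaussianPDFReal_nonneg _ _ _) (by positivity)
  have hi := integrableOn_Ioi_deriv_of_nonneg' hd hn tendsto_gaussianPDFReal_div_atTop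
  have hI := integral_Ioi_of_hasDerivAt_of_nonneg' hd hn tendsto_gaussianPDFReal_div_atTop
  have hφ : IntegrableOn (gaussianPDFReal 0 1) (Ioi z) := (integrable_gaussianPDFReal 0 1).integrableOn
  rw [zero_sub, neg_neg] at hI
  rw [← hI, gaussianTail_eq_integral, ← integral_const_mul]
  refine ⟨setIntegral_mono_on hφ hi measurableSet_Ioi fun x hx => ?_,
    setIntegral_mono_on hi (hφ.const_mul _) measurableSet_Ioi fun x hx => ?_⟩
  · exact le_mul_of_one_le_right (gaussianPDFReal_nonneg _ _ _)
      (le_add_of_nonneg_right (by positivity))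
  · rw [mul_comm]
    have : z < x := hx
    exact mul_le_mul_of_nonneg_right (by gcongr) (gaussianPDFReal_nonneg _ _ _)

lemma gaussianTail_pos {z : ℝ} (hz : 0 < z) : 0 < gaussianTail z := by
  have h := (gaussianTail_mills hz).2
  have h1 : 0 < gaussianPDFReal 0 1 z / z := div_pos (gaussianPDFReal_pos _ _ _ one_ne_zero) hz
  exact pos_of_mul_pos_right (h1.trans_le h) (by positivity)

lemma tendsto_gaussianTail_mul_div_atTop :
    Tendsto (fun z => gaussianTail z * (z / gaussianPDFReal 0 1 z)) atTop (𝓝 1) := by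
  have hl : Tendsto (fun z : ℝ => (1 + 1 / z ^ 2)⁻¹) atTop (𝓝 1) := by
    have : Tendsto (fun z : ℝ => 1 / z ^ 2) atTop (𝓝 0) :=
      tendsto_const_nhds.div_atTop (tendsto_pow_atTop two_ne_zero)
    simpa using (this.const_add 1).inv₀ (by simp)
  refine tendsto_of_tendsto_of_tendsto_of_le_of_le' hl tendsto_const_nhds ?_ ?_
  · filter_upwards [eventually_gt_atTop 0] with z hz
    have h := (gaussianTail_mills hz).2
    have hφ := gaussianPDFReal_pos 0 1 z one_ne_zero
    rw [inv_le_iff_one_le_mul₀' (by positivity), ← mul_assoc, ← mul_div_assoc, le_div_iff₀ hφ,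
      one_mul]
    rwa [div_le_iff₀ hz] at h
  · filter_upwards [eventually_gt_atTop 0] with z hz
    have h := (gaussianTail_mills hz).1
    have hφ := gaussianPDFReal_pos 0 1 z one_ne_zero
    rw [← mul_div_assoc, div_le_one hφ]
    rwa [le_div_iff₀ hz] at h

lemma tendsto_gaussianTail_atTop : Tendsto gaussianTail atTop (𝓝 0) := by
  have h := tendsto_gaussianPDFReal_div_atTop.neg
  simp only [neg_neg, neg_zero] at h
  refine squeeze_zero' (Eventually.of_forall fun z => measureReal_nonneg) ?_ h
  filter_upwards [eventually_gt_atTop 0] with z hz using (gaussianTail_mills hz).1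

/-- If `y ∼ z → ∞` then the ratio of Gaussian tails has the same limit as the ratio of densities. -/
lemma tendsto_gaussianTail_div {ι : Type*} {l : Filter ι} {y z : ι → ℝ} {L ρ : ℝ} (hρ : 0 < ρ)
    (hz : Tendsto z l atTop) (hyz : Tendsto (fun i => y i / z i) l (𝓝 ρ))
    (hL : Tendsto (fun i => Real.exp (-(y i ^ 2 - z i ^ 2) / 2)) l (𝓝 L)) :
    Tendsto (fun i => gaussianTail (y i) / gaussianTail (z i)) l (𝓝 (L / ρ)) := by
  have hz0 := hz.eventually_gt_atTop 0
  have hy : Tendsto y l atTop := by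
    refine (hz.atTop_mul_pos hρ hyz).congr' ?_
    filter_upwards [hz0] with i hi
    field_simp
  have h1 := (tendsto_gaussianTail_mul_div_atTop.comp hy).div
    (tendsto_gaussianTail_mul_div_atTop.comp hz) one_ne_zero
  have h2 := h1.mul (hL.div hyz hρ.ne')
  simp only [div_one, one_mul] at h2
  refine h2.congr' ?_
  filter_upwards [hz0, hy.eventually_gt_atTop 0] with i hi hi'
  have hyp := gaussianTail_pos hi'
  have hzp := gaussianTail_pos hi
  simp only [Function.comp_apply, Pi.div_apply]
  have he : Real.exp (-(y i ^ 2 - z i ^ 2) / 2)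
      = gaussianPDFReal 0 1 (y i) / gaussianPDFReal 0 1 (z i) := by
    rw [gaussianPDFReal_zero_one, gaussianPDFReal_zero_one,
      mul_div_mul_left _ _ (by positivity), ← Real.exp_sub]
    congr 1; ring
  rw [he]
  have := gaussianPDFReal_pos 0 1 (y i) one_ne_zero
  have := gaussianPDFReal_pos 0 1 (z i) one_ne_zero
  field_simp

namespace IsBrownianMotion

variable {Ω : Type*} [MeasurableSpace Ω] {P : Measure Ω} {B : ℝ → Ω → ℝ}

lemma measureReal_sub_mem (hB : IsBrownianMotion P B) {s t : ℝ} (hs : 0 ≤ s) (hst : s ≤ t)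
    {A : Set ℝ} (hA : MeasurableSet A) :
    P.real {ω | B t ω - B s ω ∈ A} = (gaussianReal 0 1).real {y | √(t - s) * y ∈ A} := by
  have h := hB.2.2.1 s t hs hst
  have h2 : gaussianReal 0 (Real.toNNReal (t - s))
      = (gaussianReal 0 1).map (√(t - s) * ·) := by
    rw [gaussianReal_map_const_mul]
    congr 1
    · simp
    · ext
      simp [Real.sq_sqrt (sub_nonneg.2 hst), hst]
  rw [h2] at h
  have h3 := congrArg (fun μ => μ.real A) h
  have hm : Measurable (fun ω => B t ω - B s ω) := (hB.1 t).sub (hB.1 s)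
  rwa [map_measureReal_apply hm hA,
    map_measureReal_apply (by fun_prop) hA] at h3

lemma measureReal_le_sub_eq (hB : IsBrownianMotion P B) {s t : ℝ} (hs : 0 ≤ s) (hst : s < t)
    (c : ℝ) : P.real {ω | c ≤ B t ω - B s ω} = gaussianTail (c / √(t - s)) := by
  have := hB.measureReal_sub_mem hs hst.le (measurableSet_Ici (a := c))
  simp only [mem_Ici] at this
  rw [this, gaussianTail]
  congr 1
  ext y
  simp [div_le_iff₀' (Real.sqrt_pos.2 (sub_pos.2 hst))]

lemma measureReal_le_sub_le (hB : IsBrownianMotion P B) {s t c σ : ℝ} (hs : 0 ≤ s) (hst : s ≤ t)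
    (hc : 0 < c) (hσ : 0 < σ) (htσ : t - s ≤ σ ^ 2) :
    P.real {ω | c ≤ B t ω - B s ω} ≤ gaussianTail (c / σ) := by
  have := hB.measureReal_sub_mem hs hst (measurableSet_Ici (a := c))
  simp only [mem_Ici] at this
  rw [this, gaussianTail]
  refine measureReal_mono fun y hy => ?_
  rw [mem_ofPred_eq] at hy
  have h1 : √(t - s) ≤ σ := (Real.sqrt_le_left hσ.le).2 htσ
  have hy0 : 0 < y := pos_of_mul_pos_right (hc.trans_le hy) (Real.sqrt_nonneg _)
  rw [mem_Ici, div_le_iff₀' hσ]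
  exact hy.trans (by gcongr)

lemma one_sub_gaussianTail_le (hB : IsBrownianMotion P B) [IsProbabilityMeasure P] {s t c σ : ℝ}
    (hs : 0 ≤ s) (hst : s ≤ t) (hc : 0 < c) (hσ : 0 < σ) (htσ : t - s ≤ σ ^ 2) :
    1 - gaussianTail (c / σ) ≤ P.real {ω | -c ≤ B t ω - B s ω} := by
  have hm : MeasurableSet {ω | -c ≤ B t ω - B s ω} :=
    measurableSet_le measurable_const ((hB.1 t).sub (hB.1 s))
  have h1 := probReal_compl_eq_one_sub (μ := P) hm
  have h2 : P.real {ω | -c ≤ B t ω - B s ω}ᶜ ≤ P.real {ω | B t ω - B s ω ∈ Iic (-c)} :=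
    measureReal_mono fun ω hω => by simp at hω ⊢; linarith
  rw [hB.measureReal_sub_mem hs hst measurableSet_Iic] at h2
  have h3 : (gaussianReal 0 1).real {y | √(t - s) * y ∈ Iic (-c)}
      = P.real {ω | c ≤ B t ω - B s ω} := by
    have := hB.measureReal_sub_mem hs hst (measurableSet_Ici (a := c))
    simp only [mem_Ici] at this
    rw [this]
    have hn : (gaussianReal 0 1).map (fun x => -x) = gaussianReal 0 1 := by
      rw [gaussianReal_map_neg, neg_zero]
    conv_rhs => rw [← hn]
    rw [map_measureReal_apply (by fun_prop) (measurableSet_le (by fun_prop) (by fun_prop))]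
    congr 1
    ext y
    simp [le_neg]
  have h4 := hB.measureReal_le_sub_le hs hst hc hσ htσ
  linarith

/-- The past of a Brownian motion sampled at times `r 0, …, r k` is independent of the
increment from `r k` to `v`. -/
lemma indepFun_past (hB : IsBrownianMotion P B) [IsProbabilityMeasure P] {r : ℕ → ℝ}
    (hr : Monotone r) (hr0 : r 0 = 0) {k : ℕ} {v : ℝ} (hv : r k ≤ v) :
    IndepFun (fun ω (j : Finset.range (k + 1)) => B (r j) ω) (fun ω => B v ω - B (r k) ω) P := by
  let r' : ℕ → ℝ := fun j => if j ≤ k then r j else v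
  have hr' : Monotone r' := by
    intro i j hij
    simp only [r']
    split_ifs with h1 h2 h2
    · exact hr hij
    · exact (hr h1).trans hv
    · omega
    · rfl
  have hr'0 : ∀ i, 0 ≤ r' i := fun i => by
    have : r' 0 = 0 := by simp [r', hr0]
    exact this.symm.le.trans (hr' (Nat.zero_le i))
  have hI := (hB.2.2.2 r' hr' hr'0).indepFun_finset (Finset.range k) {k} (by simp)
    (fun i => (hB.1 _).sub (hB.1 _))
  let φ : (Finset.range k → ℝ) → (Finset.range (k + 1) → ℝ) := fun d j =>
    ∑ i : Finset.range k, if (i : ℕ) < j then d i else 0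
  have hφ : Measurable φ := by
    refine measurable_pi_lambda _ fun j => Finset.measurable_fun_sum _ fun i _ => ?_
    split_ifs
    · exact measurable_pi_apply _
    · exact measurable_const
  have hψ : Measurable (fun d : (({k} : Finset ℕ) → ℝ) => d ⟨k, by simp⟩) := measurable_pi_apply _
  refine (hI.comp hφ hψ).congr ?_ ?_
  · filter_upwards [hB.2.1] with ω hω
    funext j
    have hj : (j : ℕ) ≤ k := Nat.lt_succ_iff.1 (Finset.mem_range.1 j.2)
    simp only [Function.comp_apply, φ]
    rw [Finset.sum_coe_sort (Finset.range k)
      (fun i => if i < (j : ℕ) then B (r' (i + 1)) ω - B (r' i) ω else 0),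
      ← Finset.sum_filter]
    have : (Finset.range k).filter (fun i => i < (j : ℕ)) = Finset.range j := by
      ext i; simp; omega
    rw [this, Finset.sum_range_sub (fun i => B (r' i) ω)]
    simp [r', hj, hr0, hω.1]
  · refine Eventually.of_forall fun ω => ?_
    simp [r']

/-- A first-passage inequality along a discrete set of times: if after each time `r k` at which
`B` lies in `A k` the increment up to time `v` lies in `G k` with probability at least `p`, and
these two facts force `H`, then `H` is at least `p` times as likely as a visit. -/
lemma mul_measureReal_exists_mem_le (hB : IsBrownianMotion P B) [IsProbabilityMeasure P]
    {r : ℕ → ℝ} (hr : Monotone r) (hr0 : r 0 = 0) {n : ℕ} {v : ℝ} (hv : ∀ k ≤ n, r k ≤ v)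
    {A G : ℕ → Set ℝ} (hA : ∀ k, MeasurableSet (A k)) (hG : ∀ k, MeasurableSet (G k)) {p : ℝ}
    (hp : ∀ k ≤ n, p ≤ P.real {ω | B v ω - B (r k) ω ∈ G k}) {H : Set Ω}
    (hH : ∀ k ≤ n, ∀ ω, B (r k) ω ∈ A k → B v ω - B (r k) ω ∈ G k → ω ∈ H) :
    p * P.real {ω | ∃ k ≤ n, B (r k) ω ∈ A k} ≤ P.real H := by
  let E : ℕ → Set Ω := fun k => {ω | B (r k) ω ∈ A k ∧ ∀ j < k, B (r j) ω ∉ A j}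
  let I : ℕ → Set Ω := fun k => {ω | B v ω - B (r k) ω ∈ G k}
  let S : (k : ℕ) → Set (Finset.range (k + 1) → ℝ) := fun k =>
    (fun x => x ⟨k, by simp⟩) ⁻¹' A k ∩
      ⋂ j : Finset.range (k + 1), {x | (j : ℕ) < k → x j ∉ A j}
  have hS : ∀ k, MeasurableSet (S k) := fun k => by
    have hk : Measurable fun x : Finset.range (k + 1) → ℝ => x ⟨k, by simp⟩ :=
      measurable_pi_apply _
    refine (hk (hA k)).inter (MeasurableSet.iInter fun j => ?_)
    by_cases hj : (j : ℕ) < k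
    · have hj' : Measurable fun x : Finset.range (k + 1) → ℝ => x j := measurable_pi_apply _
      simp only [hj, forall_const]
      exact (hj' (hA j)).compl
    · simp [hj]
  have hES : ∀ k, E k = (fun ω (j : Finset.range (k + 1)) => B (r j) ω) ⁻¹' S k := fun k => by
    ext ω
    simp only [E, S, mem_ofPred_eq, mem_preimage, mem_inter_iff, mem_iInter, Subtype.forall,
      Finset.mem_range]
    exact and_congr_right fun _ => ⟨fun h j _ hj => h j hj, fun h j hj => h j (by omega) hj⟩
  have hEm : ∀ k, MeasurableSet (E k) := fun k => by
    rw [hES]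
    exact (measurable_pi_lambda _ fun j => hB.1 _) (hS k)
  have hIm : ∀ k, MeasurableSet (I k) := fun k => ((hB.1 v).sub (hB.1 _)) (hG k)
  have hdisj : Pairwise fun i j => Disjoint (E i) (E j) := by
    have hlt : ∀ i j, i < j → Disjoint (E i) (E j) := fun i j hij =>
      Set.disjoint_left.2 fun ω hi hj => hj.2 i hij hi.1
    intro i j hij
    rcases lt_or_gt_of_ne hij with h | h
    · exact hlt i j h
    · exact (hlt j i h).symm
  have hind : ∀ k ≤ n, P.real (E k ∩ I k) = P.real (E k) * P.real (I k) := fun k hk => by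
    have := (hB.indepFun_past hr hr0 (hv k hk)).measure_inter_preimage_eq_mul (S k) (G k)
      (hS k) (hG k)
    rw [← hES] at this
    simp only [measureReal_def, ← ENNReal.toReal_mul]
    exact congrArg ENNReal.toReal this
  have hU : {ω | ∃ k ≤ n, B (r k) ω ∈ A k} ⊆ ⋃ k ∈ Finset.range (n + 1), E k := by
    classical
    rintro ω ⟨k, hk, hω⟩
    have hex : ∃ k, B (r k) ω ∈ A k := ⟨k, hω⟩
    simp only [mem_iUnion, Finset.mem_range]
    exact ⟨Nat.find hex, by have := Nat.find_min' hex hω; omega, Nat.find_spec hex,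
      fun j hj => Nat.find_min hex hj⟩
  by_cases hp0 : p < 0
  · exact (mul_nonpos_of_nonpos_of_nonneg hp0.le measureReal_nonneg).trans measureReal_nonneg
  push Not at hp0
  calc p * P.real {ω | ∃ k ≤ n, B (r k) ω ∈ A k}
      ≤ p * P.real (⋃ k ∈ Finset.range (n + 1), E k) := by
        exact mul_le_mul_of_nonneg_left (measureReal_mono hU (measure_ne_top P _)) hp0
    _ = ∑ k ∈ Finset.range (n + 1), P.real (E k) * p := by
        rw [measureReal_biUnion_finset (fun i _ j _ hij => hdisj hij) (fun k _ => hEm k),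
          mul_comm, Finset.sum_mul]
    _ ≤ ∑ k ∈ Finset.range (n + 1), P.real (E k ∩ I k) := by
        refine Finset.sum_le_sum fun k hk => ?_
        have hk' : k ≤ n := Nat.lt_succ_iff.1 (Finset.mem_range.1 hk)
        rw [hind k hk']
        exact mul_le_mul_of_nonneg_left (hp k hk') measureReal_nonneg
    _ = P.real (⋃ k ∈ Finset.range (n + 1), E k ∩ I k) := by
        rw [measureReal_biUnion_finset
          (fun i _ j _ hij => (hdisj hij).mono inter_subset_left inter_subset_left)
          (fun k _ => (hEm k).inter (hIm k))]
    _ ≤ P.real H := by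
        refine measureReal_mono ?_
        simp only [iUnion_subset_iff, Finset.mem_range]
        exact fun k hk ω hω => hH k (by omega) ω hω.1.1 hω.2

/-- The first-passage inequality in continuous time, for visits of the time-changed process
`F t (B (T t))` to an open set. -/
lemma mul_measureReal_exists_mem_Icc_le (hB : IsBrownianMotion P B) [IsProbabilityMeasure P]
    {T : ℝ → ℝ} (hT : Monotone T) (hTc : Continuous T) (hT0 : T 0 = 0) {F : ℝ → ℝ → ℝ}
    (hF : Continuous fun z : ℝ × ℝ => F z.1 z.2) {U : Set ℝ} (hU : IsOpen U) {s v : ℝ}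
    (hs : 0 < s) (hv : T s ≤ v) {G : ℝ → Set ℝ} (hG : ∀ t, MeasurableSet (G t)) {p : ℝ}
    (hp0 : 0 ≤ p) (hp : ∀ t ∈ Icc 0 s, p ≤ P.real {ω | B v ω - B (T t) ω ∈ G t}) {H : Set Ω}
    (hH : ∀ t ∈ Icc 0 s, ∀ ω, F t (B (T t) ω) ∈ U → B v ω - B (T t) ω ∈ G t → ω ∈ H) :
    p * P.real {ω | ∃ t ∈ Icc 0 s, F t (B (T t) ω) ∈ U} ≤ P.real H := by
  let d : ℕ → ℕ → ℝ := fun m k => s * (k / (m + 1 : ℕ))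
  let E : ℕ → Set Ω := fun m => {ω | ∃ k ≤ m + 1, F (d m k) (B (T (d m k)) ω) ∈ U}
  have hd : ∀ m, ∀ k ≤ m + 1, d m k ∈ Icc 0 s := fun m k hk => by
    have h1 : (k : ℝ) / (m + 1 : ℕ) ≤ 1 := by
      rw [div_le_one (by positivity)]; exact_mod_cast hk
    exact ⟨by positivity, mul_le_of_le_one_right hs.le h1⟩
  have hE : ∀ m, p * P.real (E m) ≤ P.real H := fun m => by
    refine hB.mul_measureReal_exists_mem_le (r := fun k => T (d m k)) (n := m + 1) (v := v)
      (A := fun k => {y | F (d m k) y ∈ U}) (G := fun k => G (d m k)) ?_ ?_ ?_ ?_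
      (fun k => hG _) (fun k hk => hp _ (hd m k hk)) (fun k hk => hH _ (hd m k hk))
    · intro i j hij
      apply hT
      simp only [d]
      gcongr
    · simp [d, hT0]
    · exact fun k hk => (hT (hd m k hk).2).trans hv
    · intro k
      exact (hU.preimage (hF.comp (by fun_prop : Continuous fun y : ℝ => (d m k, y)))).measurableSet
  have hsub : ∀ᵐ ω ∂P, ω ∈ {ω | ∃ t ∈ Icc 0 s, F t (B (T t) ω) ∈ U} →
      ω ∈ ⋃ N, ⋂ m ≥ N, E m := by
    filter_upwards [hB.2.1] with ω hω
    rintro ⟨t, ht, htU⟩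
    have hcont : ContinuousOn (fun t => F t (B (T t) ω)) (Ici 0) := by
      have h1 : ContinuousOn (fun t => B (T t) ω) (Ici 0) :=
        hω.2.comp hTc.continuousOn fun t ht => by
          have := hT (mem_Ici.1 ht)
          rwa [hT0] at this
      exact hF.comp_continuousOn (continuousOn_id.prodMk h1)
    have hlim : Tendsto (fun m : ℕ => d m ⌊t / s * (m + 1 : ℕ)⌋₊) atTop (𝓝[Ici 0] t) := by
      refine tendsto_nhdsWithin_iff.2 ⟨?_, Eventually.of_forall fun m => ?_⟩
      · have h1 := (tendsto_nat_floor_mul_div_atTop (R := ℝ) (a := t / s)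
          (div_nonneg ht.1 hs.le)).comp
          (tendsto_natCast_atTop_atTop.comp (tendsto_add_atTop_nat 1))
        have h2 := h1.const_mul s
        rwa [mul_div_cancel₀ _ hs.ne'] at h2
      · simp only [d, mem_Ici]; positivity
    have hev := ((hcont t ht.1).tendsto.comp hlim).eventually (hU.mem_nhds htU)
    obtain ⟨N, hN⟩ := eventually_atTop.1 hev
    simp only [mem_iUnion, mem_iInter]
    refine ⟨N, fun m hm => ⟨_, ?_, hN m hm⟩⟩
    refine Nat.floor_le_of_le ?_
    exact mul_le_of_le_one_left (by positivity) ((div_le_one hs).2 ht.2)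
  have hmono : Monotone fun N => ⋂ m ≥ N, E m := fun N M hNM =>
    biInter_subset_biInter_left fun m hm => le_trans hNM hm
  have hlim := tendsto_measure_iUnion_atTop (μ := P) hmono
  have hlim' := (ENNReal.tendsto_toReal (measure_ne_top P _)).comp hlim
  have hle : P.real {ω | ∃ t ∈ Icc 0 s, F t (B (T t) ω) ∈ U} ≤ P.real (⋃ N, ⋂ m ≥ N, E m) :=
    ENNReal.toReal_mono (measure_ne_top P _) (measure_mono_ae hsub)
  refine (mul_le_mul_of_nonneg_left hle hp0).trans ?_
  refine le_of_tendsto (hlim'.const_mul p) (Eventually.of_forall fun N => ?_)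
  refine le_trans ?_ (hE N)
  exact mul_le_mul_of_nonneg_left (measureReal_mono (iInter₂_subset N le_rfl)) hp0

end IsBrownianMotion

lemma nullMeasurableSet_exists_mem_Icc_eq {Ω : Type*} [MeasurableSpace Ω] {P : Measure Ω}
    {g : ℝ → Ω → ℝ} (hg : ∀ t, Measurable (g t))
    (hc : ∀ᵐ ω ∂P, ContinuousOn (fun t => g t ω) (Ici 0)) (c r : ℝ) :
    NullMeasurableSet {ω | ∃ t ∈ Icc 0 r, g t ω = c} P := by
  rcases lt_or_ge r 0 with hr | hr
  · simp [Icc_eq_empty hr.not_ge]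
  have : Nonempty (Icc 0 r) := ⟨⟨0, by simp [hr]⟩⟩
  let d : ℕ → Icc 0 r := TopologicalSpace.denseSeq (Icc 0 r)
  have hm : MeasurableSet (⋂ n : ℕ, ⋃ k : ℕ, {ω | |g (d k) ω - c| < 1 / ((n : ℝ) + 1)}) :=
    MeasurableSet.iInter fun n => MeasurableSet.iUnion fun k =>
      measurableSet_lt ((hg _).sub_const c).abs measurable_const
  refine hm.nullMeasurableSet.congr ?_
  filter_upwards [hc] with ω hω
  refine propext ?_
  change (ω ∈ ⋂ n : ℕ, ⋃ k : ℕ, {ω | |g (d k) ω - c| < 1 / ((n : ℝ) + 1)}) ↔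
    ∃ t ∈ Icc 0 r, g t ω = c
  have hω' : Continuous fun t : Icc 0 r => |g t ω - c| :=
    ((continuousOn_iff_continuous_domRestrict.1 (hω.mono Icc_subset_Ici_self)).sub
      continuous_const).abs
  simp only [mem_iInter, mem_iUnion, mem_ofPred_eq]
  constructor
  · intro h
    obtain ⟨t, -, ht⟩ := isCompact_univ.exists_isMinOn univ_nonempty hω'.continuousOn
    refine ⟨t, t.2, ?_⟩
    have h0 : |g t ω - c| ≤ 0 := by
      refine le_of_forall_pos_le_add fun e he => ?_
      obtain ⟨n, hn⟩ := exists_nat_one_div_lt he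
      obtain ⟨k, hk⟩ := h n
      have := isMinOn_iff.1 ht (d k) (mem_univ _)
      linarith
    have := abs_nonpos_iff.1 h0
    linarith
  · rintro ⟨t, ht, htc⟩ n
    have hopen : IsOpen {t : Icc 0 r | |g t ω - c| < 1 / ((n : ℝ) + 1)} :=
      isOpen_lt hω' continuous_const
    obtain ⟨y, hy, k, rfl⟩ :=
      (TopologicalSpace.denseRange_denseSeq (Icc 0 r)).inter_open_nonempty _ hopen
        ⟨⟨t, ht⟩, by simp [htc]; positivity⟩
    exact ⟨k, hy⟩

lemma tendsto_div_mul_nhdsGT_zero {c σ : ℝ} (hc : 0 < c) (hσ : 0 < σ) :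
    Tendsto (fun ε : ℝ => c / (ε * σ)) (𝓝[>] 0) atTop := by
  have : Tendsto (fun ε : ℝ => c / σ * ε⁻¹) (𝓝[>] 0) atTop :=
    tendsto_inv_nhdsGT_zero.const_mul_atTop (by positivity)
  refine this.congr fun ε => ?_
  rw [← div_eq_mul_inv, div_div, mul_comm]

lemma tendsto_gaussianTail_shift_div {a q κ lam : ℝ} (ha : 0 < a) (hlam : 0 < lam) :
    Tendsto (fun ε : ℝ => gaussianTail ((q * (ε ^ 2 * κ) + a) /
        (ε * √((1 - (ε ^ 2 * κ) ^ 2) / (2 * lam)))) / gaussianTail (a / (ε * √(1 / (2 * lam)))))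
      (𝓝[>] 0) (𝓝 (Real.exp (-(2 * lam * q * a * κ)))) := by
  have hpos : ∀ᶠ ε : ℝ in 𝓝[>] 0, 0 < 1 - (ε ^ 2 * κ) ^ 2 := by
    refine Filter.Eventually.filter_mono nhdsWithin_le_nhds ?_
    have hc : Continuous fun ε : ℝ => 1 - (ε ^ 2 * κ) ^ 2 := by fun_prop
    exact hc.continuousAt.eventually (lt_mem_nhds (by simp))
  have hmem : ∀ᶠ ε : ℝ in 𝓝[>] 0, 0 < ε := self_mem_nhdsWithin
  rw [← div_one (Real.exp _)]
  refine tendsto_gaussianTail_div one_pos ?_ ?_ ?_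
  · exact tendsto_div_mul_nhdsGT_zero ha (by positivity)
  · have hc : ContinuousAt (fun ε : ℝ => (q * (ε ^ 2 * κ) + a) / a / √(1 - (ε ^ 2 * κ) ^ 2)) 0 :=
      ContinuousAt.div (by fun_prop) (by fun_prop) (by simp)
    have h0 : Tendsto (fun ε : ℝ => (q * (ε ^ 2 * κ) + a) / a / √(1 - (ε ^ 2 * κ) ^ 2)) (𝓝[>] 0)
        (𝓝 1) := by
      simpa [ha.ne'] using hc.tendsto.mono_left nhdsWithin_le_nhds
    refine h0.congr' ?_
    filter_upwards [hpos, hmem] with ε h1 hε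
    have h2 : √((1 - (ε ^ 2 * κ) ^ 2) / (2 * lam))
        = √(1 - (ε ^ 2 * κ) ^ 2) * √(1 / (2 * lam)) := by
      rw [← Real.sqrt_mul h1.le, mul_one_div]
    have h3 : √(1 / (2 * lam)) ≠ 0 := by positivity
    have h4 : √(1 - (ε ^ 2 * κ) ^ 2) ≠ 0 := (Real.sqrt_pos.2 h1).ne'
    rw [h2]
    generalize √(1 - (ε ^ 2 * κ) ^ 2) = u at *
    generalize √(1 / (2 * lam)) = w at *
    field_simp
  · have hc : ContinuousAt (fun ε : ℝ => Real.exp (-(lam * (q ^ 2 * ε ^ 2 * κ ^ 2 + 2 * q * κ * a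
        + a ^ 2 * ε ^ 2 * κ ^ 2) / (1 - (ε ^ 2 * κ) ^ 2)))) 0 := by
      refine Real.continuous_exp.continuousAt.comp (ContinuousAt.neg ?_)
      exact ContinuousAt.div (by fun_prop) (by fun_prop) (by simp)
    have h0 := hc.tendsto.mono_left (nhdsWithin_le_nhds (s := Ioi 0))
    have h1 : lam * (q ^ 2 * 0 ^ 2 * κ ^ 2 + 2 * q * κ * a + a ^ 2 * 0 ^ 2 * κ ^ 2)
        / (1 - (0 ^ 2 * κ) ^ 2) = 2 * lam * q * a * κ := by ring
    rw [h1] at h0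
    refine h0.congr' ?_
    filter_upwards [hpos, hmem] with ε h1 hε
    congr 1
    rw [div_pow, div_pow, mul_pow ε, mul_pow ε, Real.sq_sqrt (div_nonneg h1.le (by positivity)),
      Real.sq_sqrt (by positivity)]
    have h2 : 1 - ε ^ 4 * κ ^ 2 ≠ 0 := by
      rw [show ε ^ 4 * κ ^ 2 = (ε ^ 2 * κ) ^ 2 by ring]
      exact h1.ne'
    field_simp
    ring

lemma tendsto_gaussianTail_div_zero {a b σ : ℝ} (ha : 0 < a) (hab : a < b) (hσ : 0 < σ) :
    Tendsto (fun ε : ℝ => gaussianTail (b / (ε * σ)) / gaussianTail (a / (ε * σ)))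
      (𝓝[>] 0) (𝓝 0) := by
  have hmem : ∀ᶠ ε : ℝ in 𝓝[>] 0, 0 < ε := self_mem_nhdsWithin
  rw [show 𝓝 (0 : ℝ) = 𝓝 (0 / (b / a)) by rw [zero_div]]
  refine tendsto_gaussianTail_div (div_pos (ha.trans hab) ha) (tendsto_div_mul_nhdsGT_zero ha hσ) ?_ ?_
  · refine tendsto_const_nhds.congr' ?_
    filter_upwards [hmem] with ε hε
    field_simp
  · refine Real.tendsto_exp_atBot.comp ?_
    have hd : 0 < b ^ 2 - a ^ 2 := by nlinarith
    have h1 := (tendsto_pow_atTop two_ne_zero).comp (tendsto_div_mul_nhdsGT_zero one_pos hσ)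
    have h2 := tendsto_neg_atTop_atBot.comp (h1.const_mul_atTop (half_pos hd))
    refine h2.congr fun ε => ?_
    simp only [Function.comp_apply]
    ring

/-- The clock `∫₀ᵗ e^{-2 λ s} ds`. -/
noncomputable def ouClock (lam t : ℝ) : ℝ := (1 - Real.exp (-(2 * lam * t))) / (2 * lam)

lemma ouClock_zero (lam : ℝ) : ouClock lam 0 = 0 := by simp [ouClock]

lemma continuous_ouClock (lam : ℝ) : Continuous (ouClock lam) := by
  unfold ouClock; fun_prop

lemma strictMono_ouClock {lam : ℝ} (hlam : 0 < lam) : StrictMono (ouClock lam) := by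
  intro s t hst
  unfold ouClock
  gcongr

lemma inv_sub_ouClock {lam : ℝ} (hlam : 0 < lam) (t : ℝ) :
    1 / (2 * lam) - ouClock lam t = (Real.exp (-(lam * t)) * √(1 / (2 * lam))) ^ 2 := by
  rw [mul_pow, Real.sq_sqrt (by positivity), ← Real.exp_nat_mul, ouClock]
  push_cast
  rw [show (2 : ℝ) * -(lam * t) = -(2 * lam * t) by ring]
  ring

lemma ouClock_le {lam : ℝ} (hlam : 0 < lam) (t : ℝ) : ouClock lam t ≤ 1 / (2 * lam) := by
  have := inv_sub_ouClock hlam t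
  nlinarith [sq_nonneg (Real.exp (-(lam * t)) * √(1 / (2 * lam)))]

/-- The value at time `t` of the linear diffusion driven by noise of intensity `ε`, when the
time-changed Brownian motion is at `y`. -/
noncomputable def ouFlow (lam x₀ ε t y : ℝ) : ℝ := Real.exp (lam * t) * (x₀ + ε * y)

lemma continuous_ouFlow (lam x₀ ε : ℝ) :
    Continuous fun z : ℝ × ℝ => ouFlow lam x₀ ε z.1 z.2 := by
  unfold ouFlow; fun_prop

lemma le_ouFlow_iff {lam x₀ ε t y q : ℝ} :
    q ≤ ouFlow lam x₀ ε t y ↔ q * Real.exp (-(lam * t)) ≤ x₀ + ε * y := by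
  rw [Real.exp_neg, ← div_eq_mul_inv, div_le_iff₀' (Real.exp_pos _), ouFlow]

lemma lt_ouFlow_iff {lam x₀ ε t y q : ℝ} :
    q < ouFlow lam x₀ ε t y ↔ q * Real.exp (-(lam * t)) < x₀ + ε * y := by
  rw [Real.exp_neg, ← div_eq_mul_inv, div_lt_iff₀' (Real.exp_pos _), ouFlow]

namespace IsBrownianMotion

variable {Ω : Type*} [MeasurableSpace Ω] {P : Measure Ω} {B : ℝ → Ω → ℝ}

lemma measureReal_le_add_mul (hB : IsBrownianMotion P B) {v ε : ℝ} (hv : 0 < v) (hε : 0 < ε)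
    (x₀ θ : ℝ) : P.real {ω | θ ≤ x₀ + ε * B v ω} = gaussianTail ((θ - x₀) / (ε * √v)) := by
  have h := hB.measureReal_le_sub_eq le_rfl hv ((θ - x₀) / ε)
  rw [sub_zero, div_div] at h
  rw [← h]
  refine measureReal_congr ?_
  filter_upwards [hB.2.1] with ω hω
  refine propext ?_
  change θ ≤ x₀ + ε * B v ω ↔ (θ - x₀) / ε ≤ B v ω - B 0 ω
  rw [hω.1, sub_zero, div_le_iff₀' hε, sub_le_iff_le_add']

lemma measureReal_hit_above_le (hB : IsBrownianMotion P B) [IsProbabilityMeasure P]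
    {lam x₀ ε s v θ q d : ℝ} (hlam : 0 < lam) (hε : 0 < ε) (hs : 0 < s) (hv : ouClock lam s ≤ v)
    (hv' : v ≤ 1 / (2 * lam)) (hd : 0 < d) (hdq : d ≤ q)
    (hθ : θ ≤ (q - d) * Real.exp (-(lam * s))) :
    (1 - gaussianTail (d / (ε * √(1 / (2 * lam))))) *
        P.real {ω | ∃ t ∈ Icc 0 s, ouFlow lam x₀ ε t (B (ouClock lam t) ω) ∈ Ioi q}
      ≤ P.real {ω | θ ≤ x₀ + ε * B v ω} := by
  have hclock : ∀ t ∈ Icc 0 s, 0 ≤ ouClock lam t ∧ ouClock lam t ≤ v := fun t ht =>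
    ⟨(ouClock_zero lam).symm.le.trans ((strictMono_ouClock hlam).monotone ht.1),
      ((strictMono_ouClock hlam).monotone ht.2).trans hv⟩
  refine hB.mul_measureReal_exists_mem_Icc_le (strictMono_ouClock hlam).monotone
    (continuous_ouClock lam) (ouClock_zero lam) (continuous_ouFlow lam x₀ ε) isOpen_Ioi hs hv
    (G := fun t => Ici (-(d * Real.exp (-(lam * t)) / ε))) (fun t => measurableSet_Ici)
    (sub_nonneg.2 (gaussianTail_le_one _)) (fun t ht => ?_) (fun t ht ω hω hG => ?_)
  · have h := hB.one_sub_gaussianTail_le (hclock t ht).1 (hclock t ht).2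
      (c := d * Real.exp (-(lam * t)) / ε) (σ := Real.exp (-(lam * t)) * √(1 / (2 * lam)))
      (by positivity) (by positivity)
      (by rw [← inv_sub_ouClock hlam]; linarith)
    convert! h using 3
    have := Real.exp_pos (-(lam * t))
    have h3 : √(1 / (2 * lam)) ≠ 0 := by positivity
    generalize √(1 / (2 * lam)) = w at *
    field_simp
  · rw [mem_Ioi, lt_ouFlow_iff] at hω
    rw [mem_Ici, ← neg_div, div_le_iff₀' hε] at hG
    have h1 : Real.exp (-(lam * s)) ≤ Real.exp (-(lam * t)) :=
      Real.exp_le_exp.2 (neg_le_neg (mul_le_mul_of_nonneg_left ht.2 hlam.le))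
    have h2 := mul_le_mul_of_nonneg_left h1 (sub_nonneg.2 hdq)
    rw [mem_ofPred_eq]
    nlinarith

lemma measureReal_hit_below_inter_le (hB : IsBrownianMotion P B) [IsProbabilityMeasure P]
    {lam x₀ ε s q q' : ℝ} (hlam : 0 < lam) (hε : 0 < ε) (hs : 0 < s) (hq : 0 < q)
    (hq' : 0 < q') :
    P.real ({ω | ∃ t ∈ Icc 0 s, ouFlow lam x₀ ε t (B (ouClock lam t) ω) ∈ Iio (-q')} ∩
        {ω | q ≤ ouFlow lam x₀ ε s (B (ouClock lam s) ω)})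
      ≤ gaussianTail (q' / (ε * √(1 / (2 * lam)))) := by
  set E := {ω | ∃ t ∈ Icc 0 s, ouFlow lam x₀ ε t (B (ouClock lam t) ω) ∈ Iio (-q')}
  set K := {ω | q ≤ ouFlow lam x₀ ε s (B (ouClock lam s) ω)}
  have hK : MeasurableSet K := by
    refine measurableSet_le measurable_const ?_
    exact ((((hB.1 _).const_mul ε).const_add x₀).const_mul _)
  have hclock : ∀ t ∈ Icc 0 s, 0 ≤ ouClock lam t ∧ ouClock lam t ≤ ouClock lam s := fun t ht =>
    ⟨(ouClock_zero lam).symm.le.trans ((strictMono_ouClock hlam).monotone ht.1),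
      (strictMono_ouClock hlam).monotone ht.2⟩
  have h : (1 - gaussianTail (q' / (ε * √(1 / (2 * lam))))) * P.real E ≤ P.real (E \ K) := by
    refine hB.mul_measureReal_exists_mem_Icc_le (strictMono_ouClock hlam).monotone
      (continuous_ouClock lam) (ouClock_zero lam) (continuous_ouFlow lam x₀ ε) isOpen_Iio hs
      le_rfl (G := fun t => Iio (q' * Real.exp (-(lam * t)) / ε)) (fun t => measurableSet_Iio)
      (sub_nonneg.2 (gaussianTail_le_one _)) (fun t ht => ?_) (fun t ht ω hω hG => ?_)
    · have h := hB.measureReal_le_sub_le (hclock t ht).1 (hclock t ht).2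
        (c := q' * Real.exp (-(lam * t)) / ε) (σ := Real.exp (-(lam * t)) * √(1 / (2 * lam)))
        (by positivity) (by positivity)
        (by rw [← inv_sub_ouClock hlam]; linarith [ouClock_le hlam s])
      have hc : q' * Real.exp (-(lam * t)) / ε / (Real.exp (-(lam * t)) * √(1 / (2 * lam)))
          = q' / (ε * √(1 / (2 * lam))) := by
        have := Real.exp_pos (-(lam * t))
        have h3 : √(1 / (2 * lam)) ≠ 0 := by positivity
        generalize √(1 / (2 * lam)) = w at *
        field_simp
      rw [hc] at h
      have hm : MeasurableSet {ω | q' * Real.exp (-(lam * t)) / ε ≤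
          B (ouClock lam s) ω - B (ouClock lam t) ω} :=
        measurableSet_le measurable_const ((hB.1 _).sub (hB.1 _))
      have h1 := probReal_compl_eq_one_sub (μ := P) hm
      have h2 : {ω | B (ouClock lam s) ω - B (ouClock lam t) ω ∈
          Iio (q' * Real.exp (-(lam * t)) / ε)} = {ω | q' * Real.exp (-(lam * t)) / ε ≤
          B (ouClock lam s) ω - B (ouClock lam t) ω}ᶜ := by
        ext ω; simp
      rw [h2, h1]
      linarith
    · refine ⟨⟨t, ht, hω⟩, fun hωK => ?_⟩
      have hωK' : q ≤ ouFlow lam x₀ ε s (B (ouClock lam s) ω) := hωK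
      rw [mem_Iio, ← not_le, le_ouFlow_iff, not_le] at hω
      rw [le_ouFlow_iff] at hωK'
      rw [mem_Iio, lt_div_iff₀' hε] at hG
      have := mul_pos hq (Real.exp_pos (-(lam * s)))
      linarith
  have h1 := measureReal_inter_add_sdiff (μ := P) (s := E) hK
  have h2 : P.real E ≤ 1 := measureReal_le_one
  have h3 : 0 ≤ gaussianTail (q' / (ε * √(1 / (2 * lam)))) := measureReal_nonneg
  nlinarith

end IsBrownianMotion

section HittingTime

variable {x : ℝ → ℝ} {qm qp : ℝ}

lemma isClosed_hitting (hx : ContinuousOn x (Ici 0)) :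
    IsClosed {t | 0 ≤ t ∧ (x t = qm ∨ x t = qp)} := by
  have h := hx.preimage_isClosed_of_isClosed isClosed_Ici
    ((isClosed_singleton (x := qm)).union (isClosed_singleton (x := qp)))
  exact h

lemma bddBelow_hitting : BddBelow {t | 0 ≤ t ∧ (x t = qm ∨ x t = qp)} := ⟨0, fun _ ht => ht.1⟩

/-- Exit through `qp` before time `s`, expressed through countably many times. -/
lemma exit_lt_iff_exists_rat (hx : ContinuousOn x (Ici 0)) (hq : qm < qp) {s : ℝ} :
    ({t | 0 ≤ t ∧ (x t = qm ∨ x t = qp)}.Nonempty ∧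
        x (sInf {t | 0 ≤ t ∧ (x t = qm ∨ x t = qp)}) = qp ∧
        sInf {t | 0 ≤ t ∧ (x t = qm ∨ x t = qp)} < s) ↔
      ∃ ρ : ℚ, (ρ : ℝ) < s ∧ (∃ t ∈ Icc (0 : ℝ) ρ, x t = qp) ∧
        ¬ ∃ t ∈ Icc (0 : ℝ) ρ, x t = qm := by
  set S := {t | 0 ≤ t ∧ (x t = qm ∨ x t = qp)} with hS
  have hcl : IsClosed S := isClosed_hitting hx
  have hbd : BddBelow S := bddBelow_hitting
  constructor
  · rintro ⟨hne, hval, hlt⟩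
    have hmem : sInf S ∈ S := hcl.csInf_mem hne hbd
    have hcont : ContinuousWithinAt x (Ici (sInf S)) (sInf S) :=
      (hx _ hmem.1).mono (Ici_subset_Ici.2 hmem.1)
    have hev : ∀ᶠ t in 𝓝[≥] (sInf S), qm < x t :=
      hcont.eventually (lt_mem_nhds (by rw [hval]; exact hq))
    obtain ⟨u, hu, hu'⟩ := (mem_nhdsGE_iff_exists_Ico_subset).1 hev
    obtain ⟨ρ, hρ, hρ'⟩ := exists_rat_btwn (lt_min hlt hu)
    refine ⟨ρ, hρ'.trans_le (min_le_left _ _), ⟨sInf S, ⟨hmem.1, hρ.le⟩, hval⟩, ?_⟩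
    rintro ⟨t, ht, hxt⟩
    have h1 : sInf S ≤ t := csInf_le hbd ⟨ht.1, Or.inl hxt⟩
    have h2 : qm < x t := hu' ⟨h1, ht.2.trans_lt (hρ'.trans_le (min_le_right _ _))⟩
    exact h2.ne' hxt
  · rintro ⟨ρ, hρ, ⟨t, ht, hxt⟩, hno⟩
    have htS : t ∈ S := ⟨ht.1, Or.inr hxt⟩
    have hmem : sInf S ∈ S := hcl.csInf_mem ⟨t, htS⟩ hbd
    have hle : sInf S ≤ ρ := (csInf_le hbd htS).trans ht.2
    refine ⟨⟨t, htS⟩, hmem.2.resolve_left fun h => hno ⟨_, ⟨hmem.1, hle⟩, h⟩, hle.trans_lt hρ⟩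

lemma exit_lt_of_forall_le (hx : ContinuousOn x (Ici 0)) (h0 : x 0 ≤ qp) {q s' s : ℝ}
    (hq : qm < q) (hs' : 0 ≤ s') (hs : s' < s) (hend : qp ≤ x s')
    (hstay : ∀ t ∈ Icc 0 s', q ≤ x t) :
    {t | 0 ≤ t ∧ (x t = qm ∨ x t = qp)}.Nonempty ∧
      x (sInf {t | 0 ≤ t ∧ (x t = qm ∨ x t = qp)}) = qp ∧
      sInf {t | 0 ≤ t ∧ (x t = qm ∨ x t = qp)} < s := by
  obtain ⟨t, ht, hxt⟩ := intermediate_value_Icc hs' (hx.mono Icc_subset_Ici_self) ⟨h0, hend⟩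
  have htS : t ∈ {t | 0 ≤ t ∧ (x t = qm ∨ x t = qp)} := ⟨ht.1, Or.inr hxt⟩
  have hmem := (isClosed_hitting hx).csInf_mem ⟨t, htS⟩ bddBelow_hitting
  have hle := (csInf_le bddBelow_hitting htS).trans ht.2
  refine ⟨⟨t, htS⟩, hmem.2.resolve_left fun h => ?_, hle.trans_lt hs⟩
  exact (hq.trans_le (hstay _ ⟨hmem.1, hle⟩)).ne' h

lemma sInf_hitting_nonneg : 0 ≤ sInf {t | 0 ≤ t ∧ (x t = qm ∨ x t = qp)} :=
  Real.sInf_nonneg fun _ ht => ht.1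

end HittingTime

/-- The path of the linear diffusion started at `x₀` with noise intensity `ε`. -/
noncomputable def ouPath {Ω : Type*} (lam x₀ ε : ℝ) (B : ℝ → Ω → ℝ) (ω : Ω) (t : ℝ) : ℝ :=
  ouFlow lam x₀ ε t (B (ouClock lam t) ω)

/-- The event that the diffusion leaves `(qm, qp)` through `qp`, before time `s`. -/
def reactiveBefore {Ω : Type*} (lam x₀ ε qm qp : ℝ) (B : ℝ → Ω → ℝ) (s : ℝ) : Set Ω :=
  {ω | {t | 0 ≤ t ∧ (ouPath lam x₀ ε B ω t = qm ∨ ouPath lam x₀ ε B ω t = qp)}.Nonempty ∧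
    ouPath lam x₀ ε B ω
      (sInf {t | 0 ≤ t ∧ (ouPath lam x₀ ε B ω t = qm ∨ ouPath lam x₀ ε B ω t = qp)}) = qp ∧
    sInf {t | 0 ≤ t ∧ (ouPath lam x₀ ε B ω t = qm ∨ ouPath lam x₀ ε B ω t = qp)} < s}

lemma reactiveBefore_mono {Ω : Type*} (lam x₀ ε qm qp : ℝ) (B : ℝ → Ω → ℝ) :
    Monotone (reactiveBefore lam x₀ ε qm qp B) :=
  fun _ _ hst _ hω => ⟨hω.1, hω.2.1, hω.2.2.trans_le hst⟩

namespace IsBrownianMotion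

variable {Ω : Type*} [MeasurableSpace Ω] {P : Measure Ω} {B : ℝ → Ω → ℝ}

lemma ae_continuousOn_ouPath (hB : IsBrownianMotion P B) {lam : ℝ} (hlam : 0 < lam) (x₀ ε : ℝ) :
    ∀ᵐ ω ∂P, ContinuousOn (ouPath lam x₀ ε B ω) (Ici 0) := by
  filter_upwards [hB.2.1] with ω hω
  have h1 : ContinuousOn (fun t => B (ouClock lam t) ω) (Ici 0) :=
    hω.2.comp (continuous_ouClock lam).continuousOn fun t ht =>
      (ouClock_zero lam).symm.le.trans ((strictMono_ouClock hlam).monotone ht)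
  exact (continuous_ouFlow lam x₀ ε).comp_continuousOn (continuousOn_id.prodMk h1)

lemma nullMeasurableSet_reactiveBefore (hB : IsBrownianMotion P B) {lam x₀ qm qp : ℝ}
    (hlam : 0 < lam) (hq : qm < qp) (ε s : ℝ) :
    NullMeasurableSet (reactiveBefore lam x₀ ε qm qp B s) P := by
  have hm : ∀ t, Measurable fun ω => ouPath lam x₀ ε B ω t := fun t =>
    (((hB.1 _).const_mul ε).const_add x₀).const_mul _
  have hc := hB.ae_continuousOn_ouPath hlam x₀ ε
  have h : NullMeasurableSet (⋃ ρ : ℚ, {ω | (ρ : ℝ) < s} ∩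
      ({ω | ∃ t ∈ Icc (0 : ℝ) ρ, ouPath lam x₀ ε B ω t = qp} \
        {ω | ∃ t ∈ Icc (0 : ℝ) ρ, ouPath lam x₀ ε B ω t = qm})) P := by
    refine NullMeasurableSet.iUnion fun ρ => (MeasurableSet.const _).nullMeasurableSet.inter ?_
    exact NullMeasurableSet.diff (nullMeasurableSet_exists_mem_Icc_eq hm hc qp ρ)
      (nullMeasurableSet_exists_mem_Icc_eq hm hc qm ρ)
  refine h.congr ?_
  filter_upwards [hc] with ω hω
  refine propext ?_
  have := exit_lt_iff_exists_rat hω hq (s := s)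
  refine Iff.trans ?_ this.symm
  change ω ∈ (⋃ ρ : ℚ, _) ↔ _
  simp only [mem_iUnion]
  rfl

variable [IsProbabilityMeasure P] {lam x₀ qm qp : ℝ}

lemma mul_measureReal_reactiveBefore_le (hB : IsBrownianMotion P B) {ε s v θ q d : ℝ}
    (hlam : 0 < lam) (hε : 0 < ε) (hs : 0 < s) (hv : ouClock lam s ≤ v)
    (hv' : v ≤ 1 / (2 * lam)) (hd : 0 < d) (hdq : d ≤ q) (hq : q < qp)
    (hθ : θ ≤ (q - d) * Real.exp (-(lam * s))) :
    (1 - gaussianTail (d / (ε * √(1 / (2 * lam))))) *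
        P.real (reactiveBefore lam x₀ ε qm qp B s)
      ≤ gaussianTail ((θ - x₀) / (ε * √v)) := by
  have hv0 : 0 < v := by
    have h := strictMono_ouClock hlam hs
    rw [ouClock_zero] at h
    exact h.trans_le hv
  rw [← hB.measureReal_le_add_mul hv0 hε]
  refine le_trans ?_ (hB.measureReal_hit_above_le hlam hε hs hv hv' hd hdq hθ)
  refine mul_le_mul_of_nonneg_left (measureReal_mono ?_ (measure_ne_top P _))
    (sub_nonneg.2 (gaussianTail_le_one _))
  exact fun ω hω => ⟨_, ⟨sInf_hitting_nonneg, hω.2.2.le⟩, hq.trans_eq hω.2.1.symm⟩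

lemma le_measureReal_reactiveBefore (hB : IsBrownianMotion P B) {ε s s' q' : ℝ}
    (hlam : 0 < lam) (hε : 0 < ε) (hs' : 0 < s') (hs : s' < s) (hqp : 0 < qp) (hx₀ : x₀ ≤ qp)
    (hq' : 0 < q') (hqm : qm < -q') :
    gaussianTail ((qp * Real.exp (-(lam * s')) - x₀) / (ε * √(ouClock lam s')))
        - gaussianTail (q' / (ε * √(1 / (2 * lam))))
      ≤ P.real (reactiveBefore lam x₀ ε qm qp B s) := by
  have hv0 : 0 < ouClock lam s' := by
    have h := strictMono_ouClock hlam hs'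
    rwa [ouClock_zero] at h
  rw [← hB.measureReal_le_add_mul hv0 hε, sub_le_iff_le_add]
  refine le_trans ?_ (add_le_add_right
    (hB.measureReal_hit_below_inter_le (x₀ := x₀) hlam hε hs' hqp hq') _)
  refine le_trans ?_ (measureReal_union_le _ _)
  refine ENNReal.toReal_mono (measure_ne_top P _) (measure_mono_ae ?_)
  filter_upwards [hB.2.1, hB.ae_continuousOn_ouPath hlam x₀ ε] with ω hω hc
  intro hmem
  have hend : qp ≤ ouPath lam x₀ ε B ω s' := le_ouFlow_iff.2 hmem
  by_cases h : ∃ t ∈ Icc 0 s', ouPath lam x₀ ε B ω t ∈ Iio (-q')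
  · exact Or.inr ⟨h, hend⟩
  · push Not at h
    refine Or.inl (exit_lt_of_forall_le hc ?_ hqm hs'.le hs hend fun t ht => not_lt.1 (h t ht))
    simpa [ouPath, ouFlow, ouClock_zero, hω.1] using hx₀

end IsBrownianMotion

section Asymptotics

lemma exp_neg_mul_log_add {lam ε : ℝ} (hlam : 0 < lam) (hε : 0 < ε) (x : ℝ) :
    Real.exp (-(lam * ((2 / lam) * Real.log (1 / ε) + x))) = ε ^ 2 * Real.exp (-(lam * x)) := by
  have h : -(lam * ((2 / lam) * Real.log (1 / ε) + x)) = Real.log (ε ^ 2) + -(lam * x) := by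
    rw [one_div, Real.log_inv, Real.log_pow]
    push_cast
    field_simp
    ring
  rw [h, Real.exp_add, Real.exp_log (by positivity)]

lemma ouClock_mul_log_add {lam ε : ℝ} (hlam : 0 < lam) (hε : 0 < ε) (x : ℝ) :
    ouClock lam ((2 / lam) * Real.log (1 / ε) + x)
      = (1 - (ε ^ 2 * Real.exp (-(lam * x))) ^ 2) / (2 * lam) := by
  rw [← exp_neg_mul_log_add hlam hε, ← Real.exp_nat_mul, ouClock]
  congr 4
  push_cast
  ring

lemma eventually_mul_log_add_pos {lam : ℝ} (hlam : 0 < lam) (x : ℝ) :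
    ∀ᶠ ε : ℝ in 𝓝[>] 0, 0 < (2 / lam) * Real.log (1 / ε) + x := by
  have h : Tendsto (fun ε : ℝ => Real.log (1 / ε)) (𝓝[>] 0) atTop := by
    simp only [one_div]
    exact Real.tendsto_log_atTop.comp tendsto_inv_nhdsGT_zero
  exact (tendsto_atTop_add_const_right _ x (h.const_mul_atTop (by positivity))).eventually_gt_atTop 0

variable {Ω : Type*} [MeasurableSpace Ω] {P : Measure Ω} [IsProbabilityMeasure P]
  {B : ℝ → Ω → ℝ} {lam x₀ qm qp : ℝ}

lemma tendsto_one_sub_gaussianTail {d σ : ℝ} (hd : 0 < d) (hσ : 0 < σ) :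
    Tendsto (fun ε : ℝ => 1 - gaussianTail (d / (ε * σ))) (𝓝[>] 0) (𝓝 1) := by
  simpa using (tendsto_gaussianTail_atTop.comp (tendsto_div_mul_nhdsGT_zero hd hσ)).const_sub 1

/-- The probability of leaving through `qp` before time `(2/λ) log (1/ε) + x`, relative to the
probability that the Gaussian limit of `e^{-λt} X_ε(t)` is positive. -/
lemma IsBrownianMotion.tendsto_measureReal_reactiveBefore_div (hB : IsBrownianMotion P B)
    (hlam : 0 < lam) (hqm : qm < x₀) (hx₀ : x₀ < 0) (hqp : 0 < qp) (x : ℝ) :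
    Tendsto (fun ε : ℝ =>
        P.real (reactiveBefore lam x₀ ε qm qp B ((2 / lam) * Real.log (1 / ε) + x)) /
          gaussianTail (-x₀ / (ε * √(1 / (2 * lam)))))
      (𝓝[>] 0) (𝓝 (Real.exp (-(2 * lam * qp * -x₀ * Real.exp (-(lam * x)))))) := by
  have hmem : ∀ᶠ ε : ℝ in 𝓝[>] 0, 0 < ε := self_mem_nhdsWithin
  have hσ : 0 < √(1 / (2 * lam)) := by positivity
  have ha : 0 < -x₀ := neg_pos.2 hx₀
  have hG : Continuous fun y : ℝ =>
      Real.exp (-(2 * lam * qp * -x₀ * Real.exp (-(lam * y)))) := by fun_prop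
  have hD : ∀ ε : ℝ, 0 < ε → 0 < gaussianTail (-x₀ / (ε * √(1 / (2 * lam)))) :=
    fun ε hε => gaussianTail_pos (by positivity)
  refine tendsto_order.2 ⟨fun u hu => ?_, fun u hu => ?_⟩
  · have hev : ∀ᶠ y in 𝓝[<] x,
        u < Real.exp (-(2 * lam * qp * -x₀ * Real.exp (-(lam * y)))) :=
      Filter.Eventually.filter_mono nhdsWithin_le_nhds (hG.continuousAt.eventually (lt_mem_nhds hu))
    obtain ⟨y, hy, hyx : y < x⟩ := (hev.and self_mem_nhdsWithin).exists
    obtain ⟨q', hq1, hq2⟩ := exists_between (neg_lt_neg hqm)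
    have hlim := (tendsto_gaussianTail_shift_div (q := qp) (κ := Real.exp (-(lam * y))) ha hlam).sub
      (tendsto_gaussianTail_div_zero ha hq1 hσ)
    rw [sub_zero] at hlim
    filter_upwards [hlim.eventually (lt_mem_nhds hy), hmem,
      eventually_mul_log_add_pos hlam y] with ε h1 hε hs
    refine h1.trans_le ?_
    rw [← sub_div]
    refine div_le_div_of_nonneg_right ?_ (hD ε hε).le
    have h := hB.le_measureReal_reactiveBefore (x₀ := x₀) (qm := qm) hlam hε hs
      (add_lt_add_right hyx ((2 / lam) * Real.log (1 / ε))) hqp (hx₀.trans hqp).le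
      (ha.trans hq1) (by linarith)
    rwa [exp_neg_mul_log_add hlam hε, ouClock_mul_log_add hlam hε, sub_eq_add_neg (qp * _)] at h
  · have hev : ∀ᶠ y in 𝓝[>] x,
        Real.exp (-(2 * lam * qp * -x₀ * Real.exp (-(lam * y)))) < u :=
      Filter.Eventually.filter_mono nhdsWithin_le_nhds (hG.continuousAt.eventually (gt_mem_nhds hu))
    obtain ⟨y, hy, hxy : x < y⟩ := (hev.and self_mem_nhdsWithin).exists
    have hxy' : 0 < lam * (y - x) := mul_pos hlam (sub_pos.2 hxy)
    set q := qp * Real.exp (-(lam * (y - x) / 2)) with hq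
    set d := q - qp * Real.exp (-(lam * (y - x))) with hd
    have hd0 : 0 < d := sub_pos.2 (mul_lt_mul_of_pos_left (Real.exp_lt_exp.2 (by linarith)) hqp)
    have hdq : d ≤ q := sub_le_self _ (by positivity)
    have hqq : q < qp := mul_lt_of_lt_one_right hqp (Real.exp_lt_one_iff.2 (by linarith))
    have hδ := tendsto_one_sub_gaussianTail hd0 hσ
    have hlim := (tendsto_gaussianTail_shift_div (q := qp) (κ := Real.exp (-(lam * y))) ha hlam).div
      hδ one_ne_zero
    rw [div_one] at hlim
    filter_upwards [hlim.eventually (gt_mem_nhds hy), hmem,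
      eventually_mul_log_add_pos hlam x, hδ.eventually (lt_mem_nhds one_pos)] with ε h1 hε hs hδε
    refine lt_of_le_of_lt ?_ h1
    have hle : (2 / lam) * Real.log (1 / ε) + x ≤ (2 / lam) * Real.log (1 / ε) + y := by linarith
    have h := hB.mul_measureReal_reactiveBefore_le (x₀ := x₀) (qm := qm) hlam hε hs
      ((strictMono_ouClock hlam).monotone hle) (ouClock_le hlam _) hd0 hdq hqq
      (θ := qp * (ε ^ 2 * Real.exp (-(lam * y)))) (by
        rw [exp_neg_mul_log_add hlam hε, hd, sub_sub_cancel, mul_assoc, mul_left_comm (Real.exp _),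
          ← Real.exp_add]
        ring_nf
        rfl)
    rw [ouClock_mul_log_add hlam hε, sub_eq_add_neg (qp * _)] at h
    rw [Pi.div_apply, div_right_comm]
    refine div_le_div_of_nonneg_right ?_ (hD ε hε).le
    rwa [le_div_iff₀' hδε]

/-- The probability of leaving through `qp` is asymptotic to the probability that the Gaussian
limit of `e^{-λt} X_ε(t)` is positive. -/
lemma IsBrownianMotion.tendsto_measureReal_iUnion_reactiveBefore_div (hB : IsBrownianMotion P B)
    (hlam : 0 < lam) (hqm : qm < x₀) (hx₀ : x₀ < 0) (hqp : 0 < qp) :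
    Tendsto (fun ε : ℝ => P.real (⋃ n : ℕ, reactiveBefore lam x₀ ε qm qp B n) /
        gaussianTail (-x₀ / (ε * √(1 / (2 * lam)))))
      (𝓝[>] 0) (𝓝 1) := by
  have hmem : ∀ᶠ ε : ℝ in 𝓝[>] 0, 0 < ε := self_mem_nhdsWithin
  have hσ : 0 < √(1 / (2 * lam)) := by positivity
  have ha : 0 < -x₀ := neg_pos.2 hx₀
  have hD : ∀ ε : ℝ, 0 < ε → 0 < gaussianTail (-x₀ / (ε * √(1 / (2 * lam)))) :=
    fun ε hε => gaussianTail_pos (by positivity)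
  refine tendsto_order.2 ⟨fun u hu => ?_, fun u hu => ?_⟩
  · have hG : Tendsto (fun y : ℝ => Real.exp (-(2 * lam * qp * -x₀ * Real.exp (-(lam * y)))))
        atTop (𝓝 1) := by
      have h1 : Tendsto (fun y : ℝ => Real.exp (-(lam * y))) atTop (𝓝 0) :=
        Real.tendsto_exp_neg_atTop_nhds_zero.comp (tendsto_id.const_mul_atTop hlam)
      have h2 := (Real.continuous_exp.tendsto _).comp (h1.const_mul (2 * lam * qp * -x₀)).neg
      simpa [Function.comp_def] using h2
    obtain ⟨y, hy⟩ := (hG.eventually (lt_mem_nhds hu)).exists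
    filter_upwards [(hB.tendsto_measureReal_reactiveBefore_div hlam hqm hx₀ hqp y).eventually
      (lt_mem_nhds hy), hmem] with ε h1 hε
    refine h1.trans_le (div_le_div_of_nonneg_right (measureReal_mono ?_ (measure_ne_top P _))
      (hD ε hε).le)
    obtain ⟨n, hn⟩ := exists_nat_ge ((2 / lam) * Real.log (1 / ε) + y)
    exact (reactiveBefore_mono lam x₀ ε qm qp B hn).trans
      (subset_iUnion (fun n : ℕ => reactiveBefore lam x₀ ε qm qp B n) n)
  · have hδ := tendsto_one_sub_gaussianTail (half_pos hqp) hσ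
    have hlim := hδ.inv₀ one_ne_zero
    rw [inv_one] at hlim
    filter_upwards [hlim.eventually (gt_mem_nhds hu), hmem,
      hδ.eventually (lt_mem_nhds one_pos)] with ε h1 hε hδε
    refine lt_of_le_of_lt ?_ h1
    rw [div_le_iff₀ (hD ε hε), inv_mul_eq_div]
    have hmono : Monotone fun n : ℕ => reactiveBefore lam x₀ ε qm qp B n :=
      (reactiveBefore_mono lam x₀ ε qm qp B).comp Nat.mono_cast
    have hP := (ENNReal.tendsto_toReal (measure_ne_top P _)).comp
      (tendsto_measure_iUnion_atTop (μ := P) hmono)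
    refine le_of_tendsto hP ?_
    filter_upwards [eventually_gt_atTop 0] with n hn
    have h := hB.mul_measureReal_reactiveBefore_le (x₀ := x₀) (qm := qm) (s := n) hlam hε
      (by exact_mod_cast hn) (ouClock_le hlam _) le_rfl (half_pos hqp) le_rfl (half_lt_self hqp)
      (θ := 0) (by rw [sub_self, zero_mul])
    rw [zero_sub] at h
    exact (le_div_iff₀' hδε).2 h

lemma IsBrownianMotion.eventually_measureReal_iUnion_reactiveBefore_pos (hB : IsBrownianMotion P B)
    (hlam : 0 < lam) (hqm : qm < x₀) (hx₀ : x₀ < 0) (hqp : 0 < qp) :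
    ∀ᶠ ε : ℝ in 𝓝[>] 0, 0 < P.real (⋃ n : ℕ, reactiveBefore lam x₀ ε qm qp B n) := by
  filter_upwards [(hB.tendsto_measureReal_iUnion_reactiveBefore_div hlam hqm hx₀ hqp).eventually
    (lt_mem_nhds one_pos)] with ε h
  refine lt_of_le_of_ne measureReal_nonneg fun h0 => ?_
  rw [← h0, zero_div] at h
  exact h.false

lemma IsBrownianMotion.tendsto_measureReal_reactiveBefore_div_iUnion (hB : IsBrownianMotion P B)
    (hlam : 0 < lam) (hqm : qm < x₀) (hx₀ : x₀ < 0) (hqp : 0 < qp) (x : ℝ) :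
    Tendsto (fun ε : ℝ =>
        P.real (reactiveBefore lam x₀ ε qm qp B ((2 / lam) * Real.log (1 / ε) + x)) /
          P.real (⋃ n : ℕ, reactiveBefore lam x₀ ε qm qp B n))
      (𝓝[>] 0) (𝓝 (Real.exp (-(2 * lam * qp * -x₀ * Real.exp (-(lam * x)))))) := by
  have hmem : ∀ᶠ ε : ℝ in 𝓝[>] 0, 0 < ε := self_mem_nhdsWithin
  have h := (hB.tendsto_measureReal_reactiveBefore_div hlam hqm hx₀ hqp x).div
    (hB.tendsto_measureReal_iUnion_reactiveBefore_div hlam hqm hx₀ hqp) one_ne_zero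
  rw [div_one] at h
  refine h.congr' ?_
  filter_upwards [hmem] with ε hε
  have ha : 0 < -x₀ := neg_pos.2 hx₀
  exact div_div_div_cancel_right₀ (gaussianTail_pos (by positivity)).ne' _ _

end Asymptotics

/-- Random variables converge in distribution as soon as the probabilities of `{Y < x}` converge
for every real `x`. -/
lemma tendsto_integral_of_tendsto_measureReal_lt {ι Ω Ω' : Type*} [MeasurableSpace Ω]
    [MeasurableSpace Ω'] {l : Filter ι} [l.IsCountablyGenerated] {μ : ι → Measure Ω}
    {Y : ι → Ω → ℝ} {ν : Measure Ω'} [IsProbabilityMeasure ν] {W : Ω' → ℝ} (hW : Measurable W)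
    (hY : ∀ᶠ i in l, IsProbabilityMeasure (μ i) ∧ AEMeasurable (Y i) (μ i))
    (h : ∀ x, Tendsto (fun i => (μ i).real {ω | Y i ω < x}) l (𝓝 (ν.real {ω | W ω < x})))
    (f : BoundedContinuousFunction ℝ ℝ) :
    Tendsto (fun i => ∫ ω, f (Y i ω) ∂(μ i)) l (𝓝 (∫ ω, f (W ω) ∂ν)) := by
  classical
  let law : ι → ProbabilityMeasure ℝ := fun i =>
    if hi : IsProbabilityMeasure (μ i) ∧ AEMeasurable (Y i) (μ i) then
      ⟨(μ i).map (Y i), have := hi.1; Measure.isProbabilityMeasure_map hi.2⟩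
    else ⟨Measure.dirac 0, inferInstance⟩
  let law' : ProbabilityMeasure ℝ := ⟨ν.map W, Measure.isProbabilityMeasure_map hW.aemeasurable⟩
  have hlaw : ∀ i, IsProbabilityMeasure (μ i) ∧ AEMeasurable (Y i) (μ i) →
      (law i : Measure ℝ) = (μ i).map (Y i) := fun i hi =>
    congrArg Subtype.val (dif_pos hi)
  have hIco : ∀ (ρ : Measure ℝ) [IsProbabilityMeasure ρ] {a b : ℝ}, a < b →
      ρ.real (Ico a b) = ρ.real (Iio b) - ρ.real (Iio a) := by
    intro ρ _ a b hab
    rw [← Iio_sdiff_Iio, measureReal_sdiff (Iio_subset_Iio hab.le) measurableSet_Iio]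
  have hIio : ∀ x, Tendsto (fun i => (law i : Measure ℝ).real (Iio x)) l
      (𝓝 ((law' : Measure ℝ).real (Iio x))) := by
    intro x
    rw [show (law' : Measure ℝ).real (Iio x) = ν.real {ω | W ω < x} from
      map_measureReal_apply hW measurableSet_Iio]
    refine (h x).congr' ?_
    filter_upwards [hY] with i hi
    rw [hlaw i hi, map_measureReal_apply_of_aemeasurable hi.2 measurableSet_Iio]
    rfl
  have hlim : Tendsto law l (𝓝 law') := by
    refine (isPiSystem_Ico (id : ℝ → ℝ) id).tendsto_probabilityMeasure_of_tendsto_of_mem ?_ ?_ ?_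
    · rintro s ⟨a, b, -, rfl⟩
      exact measurableSet_Ico
    · intro u hu x hx
      obtain ⟨a, b, hab, hsub⟩ := mem_nhds_iff_exists_Ioo_subset.1 (hu.mem_nhds hx)
      obtain ⟨c, hac, hcx⟩ := exists_between hab.1
      exact ⟨Ico c b, ⟨c, b, hcx.trans hab.2, rfl⟩, Ico_mem_nhds hcx hab.2,
        (Ico_subset_Ioo_left hac).trans hsub⟩
    · rintro s ⟨a, b, hab, rfl⟩
      rw [← NNReal.tendsto_coe]
      have hsub := (hIio (id b)).sub (hIio (id a))
      rw [← hIco _ hab] at hsub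
      exact hsub.congr fun i => (hIco _ hab).symm
  have hf := ProbabilityMeasure.tendsto_iff_forall_integral_tendsto.1 hlim f
  rw [show ∫ x, f x ∂(law' : Measure ℝ) = ∫ ω, f (W ω) ∂ν from
    integral_map hW.aemeasurable f.continuous.aestronglyMeasurable] at hf
  refine hf.congr' ?_
  filter_upwards [hY] with i hi
  rw [hlaw i hi, integral_map hi.2 f.continuous.aestronglyMeasurable]

/-- The strict distribution function agrees with a continuous distribution function. -/
lemma measureReal_lt_eq_of_measureReal_le_eq {Ω : Type*} [MeasurableSpace Ω] {ν : Measure Ω}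
    [IsProbabilityMeasure ν] {Z : Ω → ℝ} {F : ℝ → ℝ} (hF : Continuous F)
    (hZ : ∀ x, ν.real {ω | Z ω ≤ x} = F x) (x : ℝ) : ν.real {ω | Z ω < x} = F x := by
  refine le_antisymm ?_ ?_
  · rw [← hZ]
    exact measureReal_mono (fun ω (hω : Z ω < x) => hω.le) (measure_ne_top ν _)
  · refine le_of_tendsto (hF.continuousAt.tendsto.mono_left (nhdsWithin_le_nhds (s := Iio x))) ?_
    filter_upwards [self_mem_nhdsWithin] with y hy
    rw [← hZ]
    exact measureReal_mono (fun ω (hω : Z ω ≤ y) => hω.trans_lt hy) (measure_ne_top ν _)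

lemma aemeasurable_cond_of_measurableSet_inter_lt {Ω : Type*} [MeasurableSpace Ω] {P : Measure Ω}
    {A : Set Ω} {T : Ω → ℝ} (hA : MeasurableSet A) (hT : ∀ s, MeasurableSet (A ∩ {ω | T ω < s})) :
    AEMeasurable T P[|A] := by
  classical
  refine ⟨A.indicator T, measurable_of_Iio fun s => ?_, ?_⟩
  · have h : A.indicator T ⁻¹' Iio s = (A ∩ {ω | T ω < s}) ∪ (Aᶜ ∩ {_ω | (0 : ℝ) < s}) := by
      ext ω
      by_cases hω : ω ∈ A <;> simp [hω]
    rw [h]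
    exact (hT s).union (hA.compl.inter (MeasurableSet.const _))
  · filter_upwards [ae_cond_mem hA] with ω hω
    rw [indicator_of_mem hω]

/-- Theorem 2 (Gumbel limit for reactive path exit times, linear case):
for `λ > 0`, `qm < x₀ < 0 < qp`, the law of `τ_ε - (2/λ) ln(1/ε)` conditioned on exit at `qp`
converges weakly, as `ε → 0⁺`, to the law of `(1/λ) ln(2 λ qp |x₀|) + (1/λ) Z` with `Z`
standard Gumbel. -/
theorem gumbel_limit_reactive_paths
    {Ω : Type*} [MeasurableSpace Ω] (P : Measure Ω) [IsProbabilityMeasure P]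
    (hPc : P.IsComplete)
    (B : ℝ → Ω → ℝ) (hB : IsBrownianMotion P B)
    (lam qm x₀ qp : ℝ) (hlam : 0 < lam) (hqm : qm < x₀) (hx₀ : x₀ < 0) (hqp : 0 < qp)
    (X : ℝ → ℝ → Ω → ℝ)
    (hX : ∀ ε t ω, X ε t ω
      = Real.exp (lam * t) * (x₀ + ε * B ((1 - Real.exp (-(2 * lam * t))) / (2 * lam)) ω))
    (τ : ℝ → Ω → ℝ)
    (hτ : ∀ ε ω, τ ε ω = sInf {t | 0 ≤ t ∧ (X ε t ω = qm ∨ X ε t ω = qp)})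
    (C : ℝ → Set Ω)
    (hC : ∀ ε, C ε
      = {ω | {t | 0 ≤ t ∧ (X ε t ω = qm ∨ X ε t ω = qp)}.Nonempty ∧ X ε (τ ε ω) ω = qp})
    -- `Z` is a standard Gumbel random variable on an auxiliary probability space
    {Ω' : Type*} [MeasurableSpace Ω'] (P' : Measure Ω') [IsProbabilityMeasure P']
    (Z : Ω' → ℝ) (hZmeas : Measurable Z)
    (hZ : ∀ x : ℝ, (P' {ω' | Z ω' ≤ x}).toReal = Real.exp (-Real.exp (-x))) :
    ∀ f : BoundedContinuousFunction ℝ ℝ,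
      Tendsto
        (fun ε : ℝ => ∫ ω, f (τ ε ω - (2 / lam) * Real.log (1 / ε)) ∂(P[|C ε]))
        (𝓝[>] 0)
        (𝓝 (∫ ω', f ((1 / lam) * Real.log (2 * lam * qp * |x₀|) + (1 / lam) * Z ω') ∂P')) := by
  have hXo : ∀ ε t ω, X ε t ω = ouPath lam x₀ ε B ω t := hX
  have hq : qm < qp := hqm.trans (hx₀.trans hqp)
  have hA : ∀ ε s, C ε ∩ {ω | τ ε ω < s} = reactiveBefore lam x₀ ε qm qp B s := by
    intro ε s
    ext ω
    simp only [hC, hτ, hXo, reactiveBefore, mem_inter_iff, mem_ofPred_eq, and_assoc]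
  have hCU : ∀ ε, C ε = ⋃ n : ℕ, reactiveBefore lam x₀ ε qm qp B n := by
    intro ε
    simp only [← hA, ← inter_iUnion]
    refine (inter_eq_left.2 fun ω _ => ?_).symm
    obtain ⟨n, hn⟩ := exists_nat_gt (τ ε ω)
    exact mem_iUnion.2 ⟨n, hn⟩
  have hAm : ∀ ε s, MeasurableSet (C ε ∩ {ω | τ ε ω < s}) := fun ε s => by
    rw [hA]
    exact (hB.nullMeasurableSet_reactiveBefore hlam hq ε s).measurable_of_complete
  have hCm : ∀ ε, MeasurableSet (C ε) := fun ε => by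
    rw [hCU]
    exact MeasurableSet.iUnion fun n => hA ε n ▸ hAm ε n
  have ha : 0 < 2 * lam * qp * |x₀| := by
    have := abs_pos.2 hx₀.ne
    positivity
  have hpos := hB.eventually_measureReal_iUnion_reactiveBefore_pos hlam hqm hx₀ hqp
  refine tendsto_integral_of_tendsto_measureReal_lt ((hZmeas.const_mul _).const_add _) ?_
    fun x => ?_
  · filter_upwards [hpos] with ε hε
    rw [← hCU] at hε
    refine ⟨cond_isProbabilityMeasure fun h0 => hε.ne' (by rw [measureReal_def, h0]; rfl), ?_⟩
    exact (aemeasurable_cond_of_measurableSet_inter_lt (hCm ε) (hAm ε)).sub_const _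
  · have hset : {ω' | (1 / lam) * Real.log (2 * lam * qp * |x₀|) + (1 / lam) * Z ω' < x}
        = {ω' | Z ω' < lam * x - Real.log (2 * lam * qp * |x₀|)} := by
      ext ω'
      rw [mem_ofPred_eq, mem_ofPred_eq, ← mul_add, one_div, inv_mul_lt_iff₀ hlam, lt_sub_iff_add_lt']
    rw [hset, measureReal_lt_eq_of_measureReal_le_eq (by fun_prop) hZ, neg_sub, sub_eq_add_neg,
      Real.exp_add, Real.exp_log ha, abs_of_neg hx₀]
    refine (hB.tendsto_measureReal_reactiveBefore_div_iUnion hlam hqm hx₀ hqp x).congr fun ε => ?_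
    rw [← hCU, ← hA, measureReal_def (P[|C ε]), cond_apply (hCm ε), ENNReal.toReal_mul,
      ENNReal.toReal_inv, div_eq_inv_mul]
    simp only [sub_lt_iff_lt_add']
    rfl
end

section
/- Let λ > 0 and q₋ < 0 < q₊. As ε → 0⁺, the conditional law Law[τ_ε − (1/λ)·ln(1/ε) | C_ε] converges weakly to the law of (1/λ)·ln(q₊) + (1/(2λ))·ln(2λ) + (1/λ)·Θ, where Θ = −ln|N| and N is a standard Gaussian random variable. -/
open MeasureTheory ProbabilityTheory Filter Topology Set

/-- The nonnegative times at which the path `g` takes one of the values `a`, `b`. -/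
def hitTimes (g : ℝ → ℝ) (a b : ℝ) : Set ℝ := {t | 0 ≤ t ∧ (g t = a ∨ g t = b)}

lemma bddBelow_hitTimes (g : ℝ → ℝ) (a b : ℝ) : BddBelow (hitTimes g a b) :=
  ⟨0, fun _ ht => ht.1⟩

lemma sInf_mem_hitTimes {g : ℝ → ℝ} (hg : ContinuousOn g (Ici 0)) {a b : ℝ}
    (hne : (hitTimes g a b).Nonempty) : sInf (hitTimes g a b) ∈ hitTimes g a b := by
  refine IsClosed.csInf_mem ?_ hne (bddBelow_hitTimes g a b)
  have h : hitTimes g a b = Ici 0 ∩ g ⁻¹' {a, b} := by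
    ext t; simp [hitTimes]
  rw [h]
  exact hg.preimage_isClosed_of_isClosed isClosed_Ici (Set.toFinite _).isClosed

section Measurability

variable {Ω : Type*} [MeasurableSpace Ω] {Y : ℝ → Ω → ℝ}

lemma measurableSet_hit_before (hm : ∀ t, Measurable (Y t))
    (hc : ∀ ω, ContinuousOn (fun t => Y t ω) (Ici 0)) (a t : ℝ) :
    MeasurableSet {ω | ∃ s ∈ Icc 0 t, Y s ω = a} := by
  rcases lt_or_ge t 0 with ht | ht
  · simp [Icc_eq_empty_of_lt ht]
  have : Nonempty (Icc (0 : ℝ) t) := ⟨⟨0, le_rfl, ht⟩⟩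
  have key : {ω | ∃ s ∈ Icc 0 t, Y s ω = a}
      = ⋂ n : ℕ, ⋃ k : ℕ, {ω | |Y (TopologicalSpace.denseSeq (Icc (0 : ℝ) t) k) ω - a|
          < 1 / ((n : ℝ) + 1)} := by
    ext ω
    have hcont : Continuous fun s : Icc (0 : ℝ) t => |Y s ω - a| :=
      ((continuousOn_iff_continuous_domRestrict.1
        ((hc ω).mono Icc_subset_Ici_self)).sub continuous_const).abs
    simp only [mem_ofPred_eq, mem_iInter, mem_iUnion]
    constructor
    · rintro ⟨s, hs, rfl⟩ n
      refine (TopologicalSpace.denseRange_denseSeq _).exists_mem_open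
        (isOpen_lt hcont continuous_const) ⟨⟨s, hs⟩, ?_⟩
      simp only [mem_ofPred_eq, sub_self, abs_zero]
      positivity
    · intro h
      obtain ⟨s, -, hs⟩ := isCompact_univ.exists_isMinOn univ_nonempty hcont.continuousOn
      refine ⟨s, s.2, ?_⟩
      by_contra hne
      obtain ⟨n, hn⟩ := exists_nat_one_div_lt (abs_pos.2 (sub_ne_zero.2 hne))
      obtain ⟨k, hk⟩ := h n
      have := hs (mem_univ (TopologicalSpace.denseSeq (Icc (0 : ℝ) t) k))
      simp only [mem_ofPred_eq] at this
      linarith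
  rw [key]
  exact MeasurableSet.iInter fun n => MeasurableSet.iUnion fun k =>
    measurableSet_lt ((hm _).sub_const a).abs measurable_const

lemma measurable_sInf_hitTimes (hm : ∀ t, Measurable (Y t))
    (hc : ∀ ω, ContinuousOn (fun t => Y t ω) (Ici 0)) (a b : ℝ) :
    Measurable fun ω => sInf (hitTimes (fun t => Y t ω) a b) := by
  refine measurable_of_Iic fun t => ?_
  rcases lt_or_ge t 0 with ht | ht
  · convert MeasurableSet.empty
    ext ω
    simp only [mem_preimage, mem_Iic, mem_empty_iff_false, iff_false, not_le]
    exact ht.trans_le (Real.sInf_nonneg fun s hs => hs.1)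
  have key : (fun ω => sInf (hitTimes (fun t => Y t ω) a b)) ⁻¹' Iic t
      = ({ω | ∃ s ∈ Icc 0 t, Y s ω = a} ∪ {ω | ∃ s ∈ Icc 0 t, Y s ω = b}) ∪
        ⋂ n : ℕ, ({ω | ∃ s ∈ Icc 0 (n : ℝ), Y s ω = a} ∪
          {ω | ∃ s ∈ Icc 0 (n : ℝ), Y s ω = b})ᶜ := by
    ext ω
    simp only [mem_preimage, mem_Iic, mem_union, mem_ofPred_eq, mem_iInter, mem_compl_iff]
    constructor
    · intro h
      by_cases hne : (hitTimes (fun t => Y t ω) a b).Nonempty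
      · obtain ⟨h0, h1 | h1⟩ := sInf_mem_hitTimes (hc ω) hne
        · exact Or.inl (Or.inl ⟨_, ⟨h0, h⟩, h1⟩)
        · exact Or.inl (Or.inr ⟨_, ⟨h0, h⟩, h1⟩)
      · right
        rintro n (⟨s, hs, h1⟩ | ⟨s, hs, h1⟩)
        · exact hne ⟨s, hs.1, Or.inl h1⟩
        · exact hne ⟨s, hs.1, Or.inr h1⟩
    · rintro ((⟨s, hs, h1⟩ | ⟨s, hs, h1⟩) | h)
      · exact (csInf_le (bddBelow_hitTimes _ a b) ⟨hs.1, Or.inl h1⟩).trans hs.2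
      · exact (csInf_le (bddBelow_hitTimes _ a b) ⟨hs.1, Or.inr h1⟩).trans hs.2
      · have : hitTimes (fun t => Y t ω) a b = ∅ := by
          refine eq_empty_of_forall_notMem fun s hs => ?_
          obtain ⟨n, hn⟩ := exists_nat_ge s
          rcases hs.2 with h1 | h1
          · exact h n (Or.inl ⟨s, ⟨hs.1, hn⟩, h1⟩)
          · exact h n (Or.inr ⟨s, ⟨hs.1, hn⟩, h1⟩)
        rw [this, Real.sInf_empty]
        exact ht
  rw [key]
  exact ((measurableSet_hit_before hm hc a t).union (measurableSet_hit_before hm hc b t)).union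
    (MeasurableSet.iInter fun n => ((measurableSet_hit_before hm hc a n).union
      (measurableSet_hit_before hm hc b n)).compl)

lemma measurableSet_exit_at (hm : ∀ t, Measurable (Y t))
    (hc : ∀ ω, ContinuousOn (fun t => Y t ω) (Ici 0)) {a b : ℝ} (hab : a ≠ b) :
    MeasurableSet {ω | (hitTimes (fun t => Y t ω) a b).Nonempty ∧
      Y (sInf (hitTimes (fun t => Y t ω) a b)) ω = b} := by
  have key : {ω | (hitTimes (fun t => Y t ω) a b).Nonempty ∧
      Y (sInf (hitTimes (fun t => Y t ω) a b)) ω = b}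
      = ⋃ q : ℚ, {ω | ∃ s ∈ Icc 0 (q : ℝ), Y s ω = b} \ {ω | ∃ s ∈ Icc 0 (q : ℝ), Y s ω = a} := by
    ext ω
    simp only [mem_ofPred_eq, mem_iUnion, Set.mem_sdiff]
    constructor
    · rintro ⟨hne, hb⟩
      have hmem := sInf_mem_hitTimes (hc ω) hne
      set σ := sInf (hitTimes (fun t => Y t ω) a b) with hσ
      have hev : ∀ᶠ t in 𝓝[≥] σ, Y t ω ≠ a := by
        have h1 : Tendsto (fun t => Y t ω) (𝓝[≥] σ) (𝓝 (Y σ ω)) :=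
          ((hc ω) σ hmem.1).mono_left (nhdsWithin_mono _ (Ici_subset_Ici.2 hmem.1))
        exact h1.eventually_ne (by rw [hb]; exact hab.symm)
      obtain ⟨u, hu, hsub⟩ := (mem_nhdsGE_iff_exists_Ico_subset).1 hev
      obtain ⟨q, hq1, hq2⟩ := exists_rat_btwn (mem_Ioi.1 hu)
      refine ⟨q, ⟨σ, ⟨hmem.1, hq1.le⟩, hb⟩, ?_⟩
      rintro ⟨s, hs, hsa⟩
      have : σ ≤ s := csInf_le (bddBelow_hitTimes _ a b) ⟨hs.1, Or.inl hsa⟩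
      exact hsub ⟨this, hs.2.trans_lt hq2⟩ hsa
    · rintro ⟨q, ⟨s, hs, hsb⟩, hna⟩
      have hin : s ∈ hitTimes (fun t => Y t ω) a b := ⟨hs.1, Or.inr hsb⟩
      have hle := csInf_le (bddBelow_hitTimes _ a b) hin
      have hmem := sInf_mem_hitTimes (hc ω) ⟨s, hin⟩
      refine ⟨⟨s, hin⟩, hmem.2.resolve_left fun h => hna ⟨_, ⟨hmem.1, hle.trans hs.2⟩, h⟩⟩
  rw [key]
  exact MeasurableSet.iUnion fun q =>
    (measurableSet_hit_before hm hc b q).diff (measurableSet_hit_before hm hc a q)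

end Measurability

section Paths

variable {lam qm qp z : ℝ} {w : ℝ → ℝ}

lemma hitTimes_nonempty (hlam : 0 < lam) (hqm : qm < 0) (hqp : 0 < qp)
    (hw : ContinuousOn w (Ici 0)) (hw0 : w 0 = 0) (hz : Tendsto w atTop (𝓝 z)) (hz0 : z ≠ 0)
    {ε : ℝ} (hε : 0 < ε) :
    (hitTimes (fun t => ε * Real.exp (lam * t) * w t) qm qp).Nonempty := by
  have hexp : Tendsto (fun t => ε * Real.exp (lam * t)) atTop atTop :=
    (Real.tendsto_exp_atTop.comp (tendsto_id.const_mul_atTop hlam)).const_mul_atTop hε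
  have hcont : ContinuousOn (fun t => ε * Real.exp (lam * t) * w t) (Ici 0) :=
    (by fun_prop : Continuous fun t => ε * Real.exp (lam * t)).continuousOn.mul hw
  rcases hz0.lt_or_gt with h | h
  · obtain ⟨t, h1, h0⟩ := (((hexp.atTop_mul_neg h hz).eventually_le_atBot qm).and
      (eventually_ge_atTop 0)).exists
    obtain ⟨s, hs, hs'⟩ := intermediate_value_Icc' h0 (hcont.mono Icc_subset_Ici_self)
      (show qm ∈ Icc _ _ from ⟨h1, by simp [hw0, hqm.le]⟩)
    exact ⟨s, hs.1, Or.inl hs'⟩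
  · obtain ⟨t, h1, h0⟩ := (((hexp.atTop_mul_pos h hz).eventually_ge_atTop qp).and
      (eventually_ge_atTop 0)).exists
    obtain ⟨s, hs, hs'⟩ := intermediate_value_Icc h0 (hcont.mono Icc_subset_Ici_self)
      (show qp ∈ Icc _ _ from ⟨by simp [hw0, hqp.le], h1⟩)
    exact ⟨s, hs.1, Or.inr hs'⟩

lemma tendsto_sInf_hitTimes_atTop (hlam : 0 < lam) (hqm : qm < 0) (hqp : 0 < qp)
    (hw : ContinuousOn w (Ici 0)) (hw0 : w 0 = 0) (hz : Tendsto w atTop (𝓝 z)) (hz0 : z ≠ 0) :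
    Tendsto (fun ε => sInf (hitTimes (fun t => ε * Real.exp (lam * t) * w t) qm qp))
      (𝓝[>] 0) atTop := by
  refine tendsto_atTop.2 fun R => ?_
  have hcont : ContinuousOn (fun t => Real.exp (lam * t) * w t) (Ici 0) :=
    (by fun_prop : Continuous fun t => Real.exp (lam * t)).continuousOn.mul hw
  obtain ⟨K, hK⟩ := isCompact_Icc.exists_bound_of_continuousOn
    (hcont.mono (Icc_subset_Ici_self : Icc 0 R ⊆ Ici 0))
  have hlim : Tendsto (fun ε : ℝ => ε * K) (𝓝[>] 0) (𝓝 0) :=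
    tendsto_nhdsWithin_of_tendsto_nhds (by
      simpa using (tendsto_id.mul_const K : Tendsto (fun ε : ℝ => ε * K) (𝓝 0) _))
  filter_upwards [hlim.eventually_lt_const (lt_min (neg_pos.2 hqm) hqp), self_mem_nhdsWithin]
    with ε hε hpos
  refine le_csInf (hitTimes_nonempty hlam hqm hqp hw hw0 hz hz0 hpos) fun t ht => ?_
  by_contra! hlt
  have h1 := hK t ⟨ht.1, hlt.le⟩
  rw [Real.norm_eq_abs] at h1
  have h2 := mul_le_mul_of_nonneg_left (abs_le.1 h1).1 (le_of_lt hpos)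
  have h3 := mul_le_mul_of_nonneg_left (abs_le.1 h1).2 (le_of_lt hpos)
  have h4 := hε.trans_le (min_le_left _ _)
  have h5 := hε.trans_le (min_le_right _ _)
  rcases ht.2 with h | h <;> dsimp only at h <;> nlinarith

lemma tendsto_path_sInf_hitTimes (hlam : 0 < lam) (hqm : qm < 0) (hqp : 0 < qp)
    (hw : ContinuousOn w (Ici 0)) (hw0 : w 0 = 0) (hz : Tendsto w atTop (𝓝 z)) (hz0 : z ≠ 0) :
    Tendsto (fun ε => w (sInf (hitTimes (fun t => ε * Real.exp (lam * t) * w t) qm qp)))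
      (𝓝[>] 0) (𝓝 z) :=
  hz.comp (tendsto_sInf_hitTimes_atTop hlam hqm hqp hw hw0 hz hz0)

lemma eventually_sInf_hitTimes_mem (hlam : 0 < lam) (hqm : qm < 0) (hqp : 0 < qp)
    (hw : ContinuousOn w (Ici 0)) (hw0 : w 0 = 0) (hz : Tendsto w atTop (𝓝 z)) (hz0 : z ≠ 0) :
    ∀ᶠ ε in 𝓝[>] (0 : ℝ), sInf (hitTimes (fun t => ε * Real.exp (lam * t) * w t) qm qp) ∈
      hitTimes (fun t => ε * Real.exp (lam * t) * w t) qm qp := by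
  filter_upwards [self_mem_nhdsWithin] with ε hε
  exact sInf_mem_hitTimes
    ((by fun_prop : Continuous fun t => ε * Real.exp (lam * t)).continuousOn.mul hw)
    (hitTimes_nonempty hlam hqm hqp hw hw0 hz hz0 hε)

/-- A path whose rescaled limit is positive eventually exits at `qp`. -/
lemma eventually_exit_at_of_pos (hlam : 0 < lam) (hqm : qm < 0) (hqp : 0 < qp)
    (hw : ContinuousOn w (Ici 0)) (hw0 : w 0 = 0) (hz : Tendsto w atTop (𝓝 z)) (hz0 : 0 < z) :
    ∀ᶠ ε in 𝓝[>] (0 : ℝ),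
      ε * Real.exp (lam * sInf (hitTimes (fun t => ε * Real.exp (lam * t) * w t) qm qp)) *
        w (sInf (hitTimes (fun t => ε * Real.exp (lam * t) * w t) qm qp)) = qp := by
  filter_upwards [eventually_sInf_hitTimes_mem hlam hqm hqp hw hw0 hz hz0.ne',
    (tendsto_path_sInf_hitTimes hlam hqm hqp hw hw0 hz hz0.ne').eventually_const_lt hz0,
    self_mem_nhdsWithin] with ε h1 h2 hε
  refine h1.2.resolve_left fun h => ?_
  have := mul_pos (mul_pos hε (Real.exp_pos
    (lam * sInf (hitTimes (fun t => ε * Real.exp (lam * t) * w t) qm qp)))) h2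
  linarith

/-- A path whose rescaled limit is negative eventually does not exit at `qp`. -/
lemma eventually_not_exit_at_of_neg (hlam : 0 < lam) (hqm : qm < 0) (hqp : 0 < qp)
    (hw : ContinuousOn w (Ici 0)) (hw0 : w 0 = 0) (hz : Tendsto w atTop (𝓝 z)) (hz0 : z < 0) :
    ∀ᶠ ε in 𝓝[>] (0 : ℝ),
      ε * Real.exp (lam * sInf (hitTimes (fun t => ε * Real.exp (lam * t) * w t) qm qp)) *
        w (sInf (hitTimes (fun t => ε * Real.exp (lam * t) * w t) qm qp)) ≠ qp := by
  filter_upwards [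
    (tendsto_path_sInf_hitTimes hlam hqm hqp hw hw0 hz hz0.ne).eventually_lt_const hz0,
    self_mem_nhdsWithin] with ε h2 hε h
  have := mul_neg_of_pos_of_neg (mul_pos hε (Real.exp_pos
    (lam * sInf (hitTimes (fun t => ε * Real.exp (lam * t) * w t) qm qp)))) h2
  linarith

lemma tendsto_sInf_hitTimes_sub (hlam : 0 < lam) (hqm : qm < 0) (hqp : 0 < qp)
    (hw : ContinuousOn w (Ici 0)) (hw0 : w 0 = 0) (hz : Tendsto w atTop (𝓝 z)) (hz0 : 0 < z) :
    Tendsto (fun ε => sInf (hitTimes (fun t => ε * Real.exp (lam * t) * w t) qm qp)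
      - (1 / lam) * Real.log (1 / ε)) (𝓝[>] 0)
      (𝓝 ((1 / lam) * (Real.log qp - Real.log z))) := by
  have hlim := tendsto_path_sInf_hitTimes hlam hqm hqp hw hw0 hz hz0.ne'
  refine Tendsto.congr' ?_
    (((hlim.log hz0.ne').const_sub (Real.log qp)).const_mul (1 / lam))
  filter_upwards [eventually_exit_at_of_pos hlam hqm hqp hw hw0 hz hz0,
    hlim.eventually_const_lt hz0, self_mem_nhdsWithin] with ε h1 h2 hε
  have hε' : (0 : ℝ) < ε := hε
  set σ := sInf (hitTimes (fun t => ε * Real.exp (lam * t) * w t) qm qp)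
  have h3 : Real.log qp = Real.log ε + lam * σ + Real.log (w σ) := by
    rw [← h1, Real.log_mul (by positivity) h2.ne', Real.log_mul hε'.ne' (Real.exp_pos _).ne',
      Real.log_exp]
  rw [h3, one_div ε, Real.log_inv]
  field_simp
  ring

end Paths

section Gaussian

lemma integral_eq_two_mul_setIntegral_Ioi {v : NNReal} (hv : v ≠ 0) {h : ℝ → ℝ}
    (hi : Integrable h (gaussianReal 0 v)) (heven : ∀ x, h (-x) = h x) :
    ∫ x, h x ∂(gaussianReal 0 v) = 2 * ∫ x in Ioi 0, h x ∂(gaussianReal 0 v) := by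
  have := nullSingletonClass_gaussianReal (μ := 0) hv
  have hmap : Measure.map (fun x => -x) (gaussianReal 0 v) = gaussianReal 0 v := by
    rw [gaussianReal_map_neg, neg_zero]
  have h1 : ∫ x in Iio 0, h x ∂(gaussianReal 0 v) = ∫ x in Ioi 0, h x ∂(gaussianReal 0 v) := by
    conv_lhs => rw [← hmap]
    rw [setIntegral_map measurableSet_Iio (by rw [hmap]; exact hi.aestronglyMeasurable)
      measurable_neg.aemeasurable]
    simp [heven]
  rw [← integral_add_compl measurableSet_Ioi hi, compl_Ioi,
    setIntegral_congr_set Iio_ae_eq_Iic.symm, h1]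
  ring

lemma measureReal_gaussianReal_Ioi {v : NNReal} (hv : v ≠ 0) :
    (gaussianReal 0 v).real (Ioi 0) = 1 / 2 := by
  have h := integral_eq_two_mul_setIntegral_Ioi hv (h := fun _ => 1) (integrable_const _)
    fun _ => rfl
  simp at h
  linarith

end Gaussian

section Conditioning

variable {Ω ι : Type*} [MeasurableSpace Ω] {P : Measure Ω} [IsProbabilityMeasure P]
  {l : Filter ι} [l.IsCountablyGenerated] {C : ι → Set Ω} {A : Set Ω}
  {g : ι → Ω → ℝ} {G : Ω → ℝ}

lemma tendsto_setIntegral_of_eventually_mem (hC : ∀ i, NullMeasurableSet (C i) P)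
    (hA : MeasurableSet A) (hg : ∀ i, AEMeasurable (g i) P)
    (hin : ∀ᵐ ω ∂P, ω ∈ A → (∀ᶠ i in l, ω ∈ C i) ∧ Tendsto (fun i => g i ω) l (𝓝 (G ω)))
    (hout : ∀ᵐ ω ∂P, ω ∉ A → ∀ᶠ i in l, ω ∉ C i) (f : BoundedContinuousFunction ℝ ℝ) :
    Tendsto (fun i => ∫ ω in C i, f (g i ω) ∂P) l (𝓝 (∫ ω in A, f (G ω) ∂P)) := by
  simp_rw [← integral_indicator₀ (hC _), ← integral_indicator hA]
  refine tendsto_integral_filter_of_dominated_convergence (fun _ => ‖f‖)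
    (Eventually.of_forall fun i => ?_) (Eventually.of_forall fun i => ?_)
    (integrable_const _) ?_
  · exact ((f.continuous.measurable.comp_aemeasurable (hg i)).indicator₀
      (hC i)).aestronglyMeasurable
  · exact Eventually.of_forall fun ω =>
      (norm_indicator_le_norm_self _ _).trans (f.norm_coe_le_norm _)
  · filter_upwards [hin, hout] with ω h1 h2
    by_cases hω : ω ∈ A
    · obtain ⟨h3, h4⟩ := h1 hω
      rw [indicator_of_mem hω]
      refine ((f.continuous.tendsto _).comp h4).congr' ?_
      filter_upwards [h3] with i hi
      simp [hi]
    · rw [indicator_of_notMem hω]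
      refine tendsto_const_nhds.congr' ?_
      filter_upwards [h2 hω] with i hi
      simp [hi]

lemma tendsto_integral_cond_of_eventually_mem (hC : ∀ i, NullMeasurableSet (C i) P)
    (hA : MeasurableSet A) (hA0 : P.real A ≠ 0) (hg : ∀ i, AEMeasurable (g i) P)
    (hin : ∀ᵐ ω ∂P, ω ∈ A → (∀ᶠ i in l, ω ∈ C i) ∧ Tendsto (fun i => g i ω) l (𝓝 (G ω)))
    (hout : ∀ᵐ ω ∂P, ω ∉ A → ∀ᶠ i in l, ω ∉ C i) (f : BoundedContinuousFunction ℝ ℝ) :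
    Tendsto (fun i => ∫ ω, f (g i ω) ∂(P[|C i])) l
      (𝓝 ((P.real A)⁻¹ * ∫ ω in A, f (G ω) ∂P)) := by
  have hP : Tendsto (fun i => P.real (C i)) l (𝓝 (P.real A)) := by
    simpa using tendsto_setIntegral_of_eventually_mem hC hA hg hin hout
      (BoundedContinuousFunction.const ℝ 1)
  refine ((hP.inv₀ hA0).mul
    (tendsto_setIntegral_of_eventually_mem hC hA hg hin hout f)).congr fun i => ?_
  rw [ProbabilityTheory.cond, integral_smul_measure, ENNReal.toReal_inv, smul_eq_mul,
    Measure.real]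

end Conditioning

section Limit

/-- Integrals of an even function against a centred Gaussian law are unchanged by conditioning
on positivity. -/
lemma inv_measureReal_mul_setIntegral_Ioi {v : NNReal} (hv : v ≠ 0) {h : ℝ → ℝ}
    (hi : Integrable h (gaussianReal 0 v)) (heven : ∀ x, h (-x) = h x) :
    ((gaussianReal 0 v).real (Ioi 0))⁻¹ * ∫ x in Ioi 0, h x ∂(gaussianReal 0 v)
      = ∫ x, h x ∂(gaussianReal 0 v) := by
  rw [measureReal_gaussianReal_Ioi hv, integral_eq_two_mul_setIntegral_Ioi hv hi heven]
  norm_num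

lemma integral_log_gaussianReal {lam : ℝ} (hlam : 0 < lam) (qp : ℝ) {f : ℝ → ℝ}
    (hf : Measurable f) :
    ∫ x, f ((1 / lam) * (Real.log qp - Real.log x))
        ∂(gaussianReal 0 (Real.toNNReal (1 / (2 * lam))))
      = ∫ x, f ((1 / lam) * Real.log qp + (1 / (2 * lam)) * Real.log (2 * lam)
            + (1 / lam) * (-Real.log |x|)) ∂(gaussianReal 0 1) := by
  have := nullSingletonClass_gaussianReal (μ := 0) (one_ne_zero : (1 : NNReal) ≠ 0)
  have hmap : gaussianReal 0 (Real.toNNReal (1 / (2 * lam)))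
      = Measure.map (fun x => √(1 / (2 * lam)) * x) (gaussianReal 0 1) := by
    rw [gaussianReal_map_const_mul, mul_zero, mul_one]
    congr 1
    ext
    rw [Real.coe_toNNReal _ (by positivity)]
    exact (Real.sq_sqrt (by positivity)).symm
  have hfm : Measurable fun x => f ((1 / lam) * (Real.log qp - Real.log x)) :=
    hf.comp (by fun_prop)
  rw [hmap, integral_map (by fun_prop) hfm.aestronglyMeasurable]
  have h0 : ∀ᵐ x ∂(gaussianReal 0 1), x ≠ 0 := by
    simp [ae_iff]
  refine integral_congr_ae ?_
  filter_upwards [h0] with x hx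
  congr 1
  rw [Real.log_mul (by positivity) hx, Real.log_sqrt (by positivity), Real.log_abs,
    one_div (2 * lam), Real.log_inv]
  field_simp
  ring

end Limit

section Brownian

variable {Ω : Type*} [MeasurableSpace Ω] {P : Measure Ω} {B : ℝ → Ω → ℝ} {lam : ℝ}

lemma IsBrownianMotion.map_eq (hB : IsBrownianMotion P B) {t : ℝ} (ht : 0 ≤ t) :
    Measure.map (B t) P = gaussianReal 0 (Real.toNNReal t) := by
  have h := hB.2.2.1 0 t le_rfl ht
  rw [sub_zero] at h
  rw [← h]
  refine Measure.map_congr ?_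
  filter_upwards [hB.2.1] with ω hω
  rw [hω.1, sub_zero]

/-- The clock of the time-changed Brownian motion stays nonnegative. -/
lemma clock_nonneg (hlam : 0 < lam) {t : ℝ} (ht : 0 ≤ t) :
    0 ≤ (1 - Real.exp (-(2 * lam * t))) / (2 * lam) := by
  have : Real.exp (-(2 * lam * t)) ≤ 1 := Real.exp_le_one_iff.2 (by nlinarith)
  exact div_nonneg (by linarith) (by positivity)

lemma tendsto_clock (hlam : 0 < lam) :
    Tendsto (fun t => (1 - Real.exp (-(2 * lam * t))) / (2 * lam)) atTop (𝓝 (1 / (2 * lam))) := by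
  have h : Tendsto (fun t => Real.exp (-(2 * lam * t))) atTop (𝓝 0) :=
    Real.tendsto_exp_neg_atTop_nhds_zero.comp (tendsto_id.const_mul_atTop (by positivity))
  simpa using (h.const_sub 1).div_const (2 * lam)

lemma continuousOn_timeChange (hlam : 0 < lam) {b : ℝ → ℝ} (hb : ContinuousOn b (Ici 0)) :
    ContinuousOn (fun t => b ((1 - Real.exp (-(2 * lam * t))) / (2 * lam))) (Ici 0) :=
  hb.comp (by fun_prop) fun _ ht => clock_nonneg hlam ht

lemma tendsto_timeChange (hlam : 0 < lam) {b : ℝ → ℝ} (hb : ContinuousOn b (Ici 0)) :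
    Tendsto (fun t => b ((1 - Real.exp (-(2 * lam * t))) / (2 * lam))) atTop
      (𝓝 (b (1 / (2 * lam)))) := by
  have h : 0 < 1 / (2 * lam) := by positivity
  exact (hb.continuousAt (Ici_mem_nhds h)).tendsto.comp (tendsto_clock hlam)

end Brownian

section AlmostSureContinuity

variable {Ω : Type*} [MeasurableSpace Ω] {P : Measure Ω} {Y : ℝ → Ω → ℝ}

/-- A process with almost surely continuous paths agrees, off a null set, with a process all of
whose paths are continuous. -/
lemma exists_continuousOn_modification (hm : ∀ t, Measurable (Y t))
    (hc : ∀ᵐ ω ∂P, ContinuousOn (fun t => Y t ω) (Ici 0)) :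
    ∃ Z : ℝ → Ω → ℝ, (∀ t, Measurable (Z t)) ∧
      (∀ ω, ContinuousOn (fun t => Z t ω) (Ici 0)) ∧ ∀ᵐ ω ∂P, ∀ t, Z t ω = Y t ω := by
  obtain ⟨s, hsae, hsm, hsc⟩ := hc.exists_measurable_mem
  refine ⟨fun t => s.indicator (Y t), fun t => (hm t).indicator hsm, fun ω => ?_, ?_⟩
  · by_cases hω : ω ∈ s
    · simpa [hω] using hsc ω hω
    · simpa [hω] using continuousOn_const
  · filter_upwards [hsae] with ω hω t
    exact indicator_of_mem hω _

lemma aemeasurable_sInf_hitTimes (hm : ∀ t, Measurable (Y t))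
    (hc : ∀ᵐ ω ∂P, ContinuousOn (fun t => Y t ω) (Ici 0)) (a b : ℝ) :
    AEMeasurable (fun ω => sInf (hitTimes (fun t => Y t ω) a b)) P := by
  obtain ⟨Z, hZm, hZc, hZ⟩ := exists_continuousOn_modification hm hc
  refine (measurable_sInf_hitTimes hZm hZc a b).aemeasurable.congr ?_
  filter_upwards [hZ] with ω hω
  simp only [hω]

lemma nullMeasurableSet_exit_at (hm : ∀ t, Measurable (Y t))
    (hc : ∀ᵐ ω ∂P, ContinuousOn (fun t => Y t ω) (Ici 0)) {a b : ℝ} (hab : a ≠ b) :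
    NullMeasurableSet {ω | (hitTimes (fun t => Y t ω) a b).Nonempty ∧
      Y (sInf (hitTimes (fun t => Y t ω) a b)) ω = b} P := by
  obtain ⟨Z, hZm, hZc, hZ⟩ := exists_continuousOn_modification hm hc
  refine (measurableSet_exit_at hZm hZc hab).nullMeasurableSet.congr ?_
  filter_upwards [hZ] with ω hω
  refine propext ?_
  change (_ ∧ _) ↔ (_ ∧ _)
  simp only [hω]

end AlmostSureContinuity

/-- Theorem 4 (Day; exit starting at the saddle point `0`):
for `λ > 0`, `q₋ < 0 < q₊`, the law of `τ_ε - (1/λ) ln(1/ε)` conditioned on exit at `q₊`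
converges weakly, as `ε → 0⁺`, to the law of
`(1/λ) ln q₊ + (1/(2λ)) ln(2λ) + (1/λ) Θ`, where `Θ = -ln |N|` and `N` is standard Gaussian. -/
theorem exit_time_limit_starting_at_zero
    {Ω : Type*} [MeasurableSpace Ω] (P : Measure Ω) [IsProbabilityMeasure P]
    (hPc : P.IsComplete)
    (B : ℝ → Ω → ℝ) (hB : IsBrownianMotion P B)
    (lam qm qp : ℝ) (hlam : 0 < lam) (hqm : qm < 0) (hqp : 0 < qp)
    (X : ℝ → ℝ → Ω → ℝ)
    (hX : ∀ ε t ω, X ε t ω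
      = ε * Real.exp (lam * t) * B ((1 - Real.exp (-(2 * lam * t))) / (2 * lam)) ω)
    (τ : ℝ → Ω → ℝ)
    (hτ : ∀ ε ω, τ ε ω = sInf {t | 0 ≤ t ∧ (X ε t ω = qm ∨ X ε t ω = qp)})
    (C : ℝ → Set Ω)
    (hC : ∀ ε, C ε
      = {ω | {t | 0 ≤ t ∧ (X ε t ω = qm ∨ X ε t ω = qp)}.Nonempty ∧ X ε (τ ε ω) ω = qp})
    -- `N` is a standard Gaussian random variable on an auxiliary probability space
    {Ω' : Type*} [MeasurableSpace Ω'] (P' : Measure Ω') [IsProbabilityMeasure P']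
    (N : Ω' → ℝ) (hN : Measure.map N P' = gaussianReal 0 1) :
    ∀ f : BoundedContinuousFunction ℝ ℝ,
      Tendsto
        (fun ε : ℝ => ∫ ω, f (τ ε ω - (1 / lam) * Real.log (1 / ε)) ∂(P[|C ε]))
        (𝓝[>] 0)
        (𝓝 (∫ ω', f ((1 / lam) * Real.log qp + (1 / (2 * lam)) * Real.log (2 * lam)
            + (1 / lam) * (-Real.log |N ω'|)) ∂P')) := by
  intro f
  have hBm := hB.1
  have hXm : ∀ ε t, Measurable (X ε t) := fun ε t => by
    simp only [funext (hX ε t)]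
    exact (hBm _).const_mul _
  have hXc : ∀ ε, ∀ᵐ ω ∂P, ContinuousOn (fun t => X ε t ω) (Ici 0) := fun ε => by
    filter_upwards [hB.2.1] with ω hω
    simp only [hX]
    exact (by fun_prop : Continuous fun t => ε * Real.exp (lam * t)).continuousOn.mul
      (continuousOn_timeChange hlam hω.2)
  have hC' : ∀ ε, NullMeasurableSet (C ε) P := fun ε => by
    rw [hC]
    simp only [hτ]
    exact nullMeasurableSet_exit_at (hXm ε) (hXc ε) (hqm.trans hqp).ne
  have hτm : ∀ ε, AEMeasurable (fun ω => τ ε ω - (1 / lam) * Real.log (1 / ε)) P := fun ε => by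
    simp only [hτ]
    exact (aemeasurable_sInf_hitTimes (hXm ε) (hXc ε) qm qp).sub_const _
  have hτ' : ∀ ε ω, τ ε ω = sInf (hitTimes (fun t => ε * Real.exp (lam * t) *
      B ((1 - Real.exp (-(2 * lam * t))) / (2 * lam)) ω) qm qp) := fun ε ω => by
    simp only [hτ, hX, hitTimes]
  have hCmem : ∀ ε ω, ω ∈ C ε ↔ (hitTimes (fun t => ε * Real.exp (lam * t) *
      B ((1 - Real.exp (-(2 * lam * t))) / (2 * lam)) ω) qm qp).Nonempty ∧
      ε * Real.exp (lam * τ ε ω) *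
        B ((1 - Real.exp (-(2 * lam * τ ε ω))) / (2 * lam)) ω = qp := fun ε ω => by
    simp only [hC, hX, hitTimes, mem_ofPred_eq]
  have hv : Real.toNNReal (1 / (2 * lam)) ≠ 0 := (Real.toNNReal_pos.2 (by positivity)).ne'
  have hlaw := hB.map_eq (t := 1 / (2 * lam)) (by positivity)
  have hnull := nullSingletonClass_gaussianReal (μ := 0) hv
  have hne : ∀ᵐ ω ∂P, B (1 / (2 * lam)) ω ≠ 0 := by
    have h : ∀ᵐ x ∂(Measure.map (B (1 / (2 * lam))) P), x ≠ 0 := by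
      rw [hlaw]
      exact compl_mem_ae_iff.2 (measure_singleton 0)
    exact ae_of_ae_map (hBm _).aemeasurable h
  have hreal : P.real (B (1 / (2 * lam)) ⁻¹' Ioi 0)
      = (gaussianReal 0 (Real.toNNReal (1 / (2 * lam)))).real (Ioi 0) := by
    rw [← hlaw, map_measureReal_apply (hBm _) measurableSet_Ioi]
  have hmain := tendsto_integral_cond_of_eventually_mem (l := 𝓝[>] (0 : ℝ)) (P := P) hC'
    (A := B (1 / (2 * lam)) ⁻¹' Ioi 0) (hBm _ measurableSet_Ioi)
    (by rw [hreal, measureReal_gaussianReal_Ioi hv]; norm_num) hτm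
    (G := fun ω => (1 / lam) * (Real.log qp - Real.log (B (1 / (2 * lam)) ω))) ?_ ?_ f
  · have hfm : Measurable fun x => f ((1 / lam) * (Real.log qp - Real.log x)) :=
      f.continuous.measurable.comp (by fun_prop)
    have hfi : Integrable (fun x => f ((1 / lam) * (Real.log qp - Real.log x)))
        (gaussianReal 0 (Real.toNNReal (1 / (2 * lam)))) :=
      Integrable.of_bound hfm.aestronglyMeasurable ‖f‖
        (Eventually.of_forall fun x => f.norm_coe_le_norm _)
    have hgm : Measurable fun x => f ((1 / lam) * Real.log qp
        + (1 / (2 * lam)) * Real.log (2 * lam) + (1 / lam) * (-Real.log |x|)) :=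
      f.continuous.measurable.comp (by fun_prop)
    have hNm : AEMeasurable N P' := AEMeasurable.of_map_ne_zero (by
      rw [hN]; exact IsProbabilityMeasure.ne_zero _)
    convert hmain using 2
    rw [hreal, ← setIntegral_map (g := B (1 / (2 * lam)))
      (f := fun x => f ((1 / lam) * (Real.log qp - Real.log x))) measurableSet_Ioi
      hfm.aestronglyMeasurable (hBm _).aemeasurable, hlaw,
      inv_measureReal_mul_setIntegral_Ioi hv hfi (fun x => by simp only [Real.log_neg_eq_log]),
      integral_log_gaussianReal hlam qp f.continuous.measurable, ← hN,
      integral_map hNm hgm.aestronglyMeasurable]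
  · filter_upwards [hB.2.1] with ω hω hpos
    have hw := continuousOn_timeChange hlam hω.2
    have hw0 : B ((1 - Real.exp (-(2 * lam * 0))) / (2 * lam)) ω = 0 := by simp [hω.1]
    have hz := tendsto_timeChange hlam hω.2
    have hpos : 0 < B (1 / (2 * lam)) ω := hpos
    refine ⟨?_, ?_⟩
    · filter_upwards [eventually_exit_at_of_pos hlam hqm hqp hw hw0 hz hpos,
        self_mem_nhdsWithin] with ε h1 hε
      rw [hCmem, hτ']
      exact ⟨hitTimes_nonempty hlam hqm hqp hw hw0 hz hpos.ne' hε, h1⟩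
    · simp only [hτ']
      exact tendsto_sInf_hitTimes_sub hlam hqm hqp hw hw0 hz hpos
  · filter_upwards [hB.2.1, hne] with ω hω hne hnpos
    have hneg : B (1 / (2 * lam)) ω < 0 := lt_of_le_of_ne (not_lt.1 hnpos) hne
    have hw := continuousOn_timeChange hlam hω.2
    have hw0 : B ((1 - Real.exp (-(2 * lam * 0))) / (2 * lam)) ω = 0 := by simp [hω.1]
    filter_upwards [eventually_not_exit_at_of_neg hlam hqm hqp hw hw0
      (tendsto_timeChange hlam hω.2) hneg] with ε h1 hmem
    rw [hCmem, hτ'] at hmem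
    exact h1 hmem.2
end
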